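/- Combining the cutoff decomposition with the strong Huygens principle: in odd dimension d ≥ 3, for α ≥ 1, the free wave group satisfies ‖⟨x⟩^{-α} e^{-itG₀} ⟨x⟩^{-α}‖_{𝓛(H¹⊕L²)} ≤ C⟨t⟩^{-α} uniformly in t ∈ ℝ. -/

import Mathlib

open MeasureTheory

/-- The Laplacian `Δf(x) = Σᵢ ∂²f/∂xᵢ²` on `ℝ^d`. -/
noncomputable def lapD (d : ℕ) (f : EuclideanSpace ℝ (Fin d) → ℂ)
    (x : EuclideanSpace ℝ (Fin d)) : ℂ :=
  ∑ i : Fin d,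
    fderiv ℝ (fun y => fderiv ℝ f y (EuclideanSpace.single i (1 : ℝ))) x
      (EuclideanSpace.single i (1 : ℝ))


open MeasureTheory Filter Topology
open scoped ContDiff

namespace WaveAux

/-- Directional derivative. -/
noncomputable def DD {V : Type*} [NormedAddCommGroup V] [NormedSpace ℝ V] (v : V) (F : V → ℝ) : V → ℝ :=
  fun p => fderiv ℝ F p v

section DD
variable {V : Type*} [NormedAddCommGroup V] [NormedSpace ℝ V]

lemma DD_smooth {F : V → ℝ} (hF : ContDiff ℝ ∞ F) (v : V) : ContDiff ℝ ∞ (DD v F) := by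
  unfold DD
  exact (hF.fderiv_right (m := ∞) (by simp)).clm_apply contDiff_const

lemma sdiff {F : V → ℝ} (hF : ContDiff ℝ ∞ F) : Differentiable ℝ F :=
  hF.differentiable (by simp)

lemma DD_comm {F : V → ℝ} (hF : ContDiff ℝ ∞ F) (v w : V) : DD v (DD w F) = DD w (DD v F) := by
  funext p
  have hs : IsSymmSndFDerivAt ℝ F p :=
    (hF.contDiffAt).isSymmSndFDerivAt (by simp only [minSmoothness_of_isRCLikeNormedField]; exact WithTop.coe_le_coe.2 le_top)
  have hd : Differentiable ℝ (fderiv ℝ F) :=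
    (hF.fderiv_right (m := ∞) (by simp)).differentiable (by simp)
  have key : ∀ a b : V, DD a (DD b F) p = fderiv ℝ (fderiv ℝ F) p a b := by
    intro a b
    unfold DD
    rw [fderiv_clm_apply (hd p) (differentiableAt_const _)]
    simp
  rw [key, key]
  exact hs v w

lemma DD_mul {F G : V → ℝ} (hF : ContDiff ℝ ∞ F) (hG : ContDiff ℝ ∞ G) (v : V) :
    DD v (fun p => F p * G p) = fun p => DD v F p * G p + F p * DD v G p := by
  funext p
  unfold DD
  rw [fderiv_fun_mul (sdiff hF p) (sdiff hG p)]
  simp; ring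

lemma DD_add {F G : V → ℝ} (hF : ContDiff ℝ ∞ F) (hG : ContDiff ℝ ∞ G) (v : V) :
    DD v (fun p => F p + G p) = fun p => DD v F p + DD v G p := by
  funext p
  unfold DD
  rw [fderiv_fun_add (sdiff hF p) (sdiff hG p)]
  simp

lemma DD_sub {F G : V → ℝ} (hF : ContDiff ℝ ∞ F) (hG : ContDiff ℝ ∞ G) (v : V) :
    DD v (fun p => F p - G p) = fun p => DD v F p - DD v G p := by
  funext p
  unfold DD
  rw [fderiv_fun_sub (sdiff hF p) (sdiff hG p)]
  simp

lemma DD_sum {ι : Type*} (s : Finset ι) {F : ι → V → ℝ} (hF : ∀ i, ContDiff ℝ ∞ (F i)) (v : V) :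
    DD v (fun p => ∑ i ∈ s, F i p) = fun p => ∑ i ∈ s, DD v (F i) p := by
  funext p
  unfold DD
  rw [fderiv_fun_sum (fun i _ => sdiff (hF i) p)]
  simp

lemma DD_zero_on {F : V → ℝ} {O : Set V} (hO : IsOpen O) (h : ∀ p ∈ O, F p = 0) (v : V) :
    ∀ p ∈ O, DD v F p = 0 := by
  intro p hp
  have : F =ᶠ[𝓝 p] fun _ => (0:ℝ) := by
    filter_upwards [hO.mem_nhds hp] with q hq using h q hq
  unfold DD
  rw [this.fderiv_eq]; simp

end DD

/-- smoothness from directional derivatives -/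
lemma contDiff_nat_of_DD {V : Type*} [NormedAddCommGroup V] [NormedSpace ℝ V] [FiniteDimensional ℝ V]
    (P : (V → ℝ) → Prop) (hd : ∀ F, P F → Differentiable ℝ F)
    (hDD : ∀ (n : ℕ) F, P F → (∀ G, P G → ContDiff ℝ n G) → ∀ v, ContDiff ℝ n (DD v F)) :
    ∀ F, P F → ContDiff ℝ ∞ F := by
  have : ∀ n : ℕ, ∀ F, P F → ContDiff ℝ n F := by
    intro n
    induction n with
    | zero => intro F hF; exact contDiff_zero.2 (hd F hF).continuous
    | succ n ih =>
      intro F hF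
      have := (contDiff_succ_iff_fderiv_apply (𝕜 := ℝ) (D := V) (n := (n : WithTop ℕ∞)) (f := F)).2
      push_cast
      refine this ⟨hd F hF, by simp, fun v => hDD n F hF ih v⟩
  intro F hF
  exact contDiff_infty.2 (fun n => this n F hF)

section param
variable {P Y : Type*} [NormedAddCommGroup P] [NormedSpace ℝ P] [FiniteDimensional ℝ P]
  [NormedAddCommGroup Y] [NormedSpace ℝ Y] [FiniteDimensional ℝ Y] [MeasurableSpace Y] [BorelSpace Y]

lemma param_hasFDerivAt (μ : Measure Y) [IsFiniteMeasureOnCompacts μ] {S : Set Y} (hS : IsCompact S)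
    {F : P × Y → ℝ} (hF : ContDiff ℝ ∞ F) (p₀ : P) :
    HasFDerivAt (fun p => ∫ y in S, F (p, y) ∂μ)
      (∫ y in S, (fderiv ℝ F (p₀, y)).comp (ContinuousLinearMap.inl ℝ P Y) ∂μ) p₀ := by
  have hcd : Continuous (fderiv ℝ F) := hF.continuous_fderiv (by simp)
  have hc' : Continuous (fun q : P × Y => (fderiv ℝ F q).comp (ContinuousLinearMap.inl ℝ P Y)) := by
    fun_prop
  obtain ⟨C, hC⟩ := ((isCompact_closedBall p₀ 1).prod hS).exists_bound_of_continuousOn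
    hc'.continuousOn
  have := hasFDerivAt_integral_of_dominated_of_fderiv_le (𝕜 := ℝ) (μ := μ.restrict S)
    (F := fun p y => F (p, y)) (x₀ := p₀) (s := Metric.closedBall p₀ 1)
    (F' := fun p y => (fderiv ℝ F (p, y)).comp (ContinuousLinearMap.inl ℝ P Y)) (bound := fun _ => C)
    (Metric.closedBall_mem_nhds _ one_pos) ?_ ?_ ?_ ?_ ?_ ?_
  · exact this
  · refine Eventually.of_forall fun p => ?_
    exact (hF.continuous.comp (by fun_prop : Continuous fun y : Y => (p, y))).aestronglyMeasurable
  · exact (hF.continuous.comp (by fun_prop : Continuous fun y : Y => (p₀, y))).continuousOn.integrableOn_compact hS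
  · exact (hc'.comp (by fun_prop : Continuous fun y : Y => (p₀, y))).aestronglyMeasurable
  · filter_upwards [ae_restrict_mem hS.measurableSet] with y hy p hp
    exact hC (p, y) ⟨hp, hy⟩
  · have : IsFiniteMeasure (μ.restrict S) := ⟨by simpa using hS.measure_lt_top⟩
    exact integrable_const _
  · refine Eventually.of_forall fun y p _ => ?_
    exact (sdiff hF (p, y)).hasFDerivAt.comp p (hasFDerivAt_prodMk_left p y)

lemma param_DD (μ : Measure Y) [IsFiniteMeasureOnCompacts μ] {S : Set Y} (hS : IsCompact S)
    {F : P × Y → ℝ} (hF : ContDiff ℝ ∞ F) (v : P) :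
    DD v (fun p => ∫ y in S, F (p, y) ∂μ) = fun p => ∫ y in S, DD (v, (0:Y)) F (p, y) ∂μ := by
  funext p
  have hcd : Continuous (fderiv ℝ F) := hF.continuous_fderiv (by simp)
  have hc' : Continuous (fun y : Y => (fderiv ℝ F (p, y)).comp (ContinuousLinearMap.inl ℝ P Y)) := by
    fun_prop
  unfold DD
  rw [(param_hasFDerivAt μ hS hF p).fderiv, ContinuousLinearMap.integral_apply]
  · simp
  · exact hc'.continuousOn.integrableOn_compact hS

lemma param_smooth (μ : Measure Y) [IsFiniteMeasureOnCompacts μ] {S : Set Y} (hS : IsCompact S)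
    {F : P × Y → ℝ} (hF : ContDiff ℝ ∞ F) :
    ContDiff ℝ ∞ (fun p => ∫ y in S, F (p, y) ∂μ) := by
  refine contDiff_nat_of_DD (fun G => ∃ F : P × Y → ℝ, ContDiff ℝ ∞ F ∧ G = fun p => ∫ y in S, F (p, y) ∂μ)
    ?_ ?_ _ ⟨F, hF, rfl⟩
  · rintro G ⟨F, hF, rfl⟩ p
    exact (param_hasFDerivAt μ hS hF p).differentiableAt
  · rintro n G ⟨F, hF, rfl⟩ ih v
    rw [param_DD μ hS hF v]
    exact ih _ ⟨_, DD_smooth hF _, rfl⟩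

end param

end WaveAux


open MeasureTheory Filter Topology
open scoped ContDiff

namespace WaveAux

/-- smooth functions of `(τ, r)` even in `r` -/
structure EvenS (A : ℝ × ℝ → ℝ) : Prop where
  smooth : ContDiff ℝ ∞ A
  even : ∀ τ r, A (τ, -r) = A (τ, r)

/-- The operator `(1/r) ∂_r`. -/
noncomputable def LL (A : ℝ × ℝ → ℝ) : ℝ × ℝ → ℝ :=
  fun p => ∫ θ in Set.Icc (0:ℝ) 1, DD ((0:ℝ), (1:ℝ)) (DD ((0:ℝ), (1:ℝ)) A) (p.1, θ * p.2)

lemma zero_of_punctured {f : ℝ → ℝ} (hf : Continuous f) {r₀ : ℝ}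
    (h : ∀ᶠ r in 𝓝[≠] r₀, f r = 0) : f r₀ = 0 := by
  have h1 : Tendsto f (𝓝[≠] r₀) (𝓝 (f r₀)) := (hf.tendsto r₀).mono_left nhdsWithin_le_nhds
  have h2 : Tendsto f (𝓝[≠] r₀) (𝓝 0) :=
    (tendsto_congr' (h.mono fun r hr => hr)).2 tendsto_const_nhds
  exact tendsto_nhds_unique h1 h2

lemma hasDerivAt_slice_r {A : ℝ × ℝ → ℝ} (hA : ContDiff ℝ ∞ A) (τ r : ℝ) :
    HasDerivAt (fun s => A (τ, s)) (DD ((0:ℝ), (1:ℝ)) A (τ, r)) r := by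
  have h := (sdiff hA (τ, r)).hasFDerivAt.comp_hasDerivAt r
    ((hasDerivAt_const r τ).prodMk (hasDerivAt_id r))
  exact h

lemma hasDerivAt_slice_t {A : ℝ × ℝ → ℝ} (hA : ContDiff ℝ ∞ A) (τ r : ℝ) :
    HasDerivAt (fun s => A (s, r)) (DD ((1:ℝ), (0:ℝ)) A (τ, r)) τ := by
  have h := (sdiff hA (τ, r)).hasFDerivAt.comp_hasDerivAt τ
    ((hasDerivAt_id τ).prodMk (hasDerivAt_const τ r))
  exact h

lemma odd_DDr {A : ℝ × ℝ → ℝ} (hA : EvenS A) (τ r : ℝ) :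
    DD ((0:ℝ), (1:ℝ)) A (τ, -r) = - DD ((0:ℝ), (1:ℝ)) A (τ, r) := by
  have h1 := (hasDerivAt_slice_r hA.smooth τ (-r)).comp r (hasDerivAt_neg r)
  have h2 := hasDerivAt_slice_r hA.smooth τ r
  have h3 : ((fun s => A (τ, s)) ∘ fun x => -x) = fun s => A (τ, s) := by
    funext s; simp [hA.even]
  rw [h3] at h1
  have := h1.unique h2
  linarith

lemma LL_smooth {A : ℝ × ℝ → ℝ} (hA : ContDiff ℝ ∞ A) : ContDiff ℝ ∞ (LL A) := by
  have hs := DD_smooth (DD_smooth hA ((0:ℝ), (1:ℝ))) ((0:ℝ), (1:ℝ))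
  exact param_smooth (P := ℝ × ℝ) (Y := ℝ) volume isCompact_Icc
    (F := fun q => DD ((0:ℝ), (1:ℝ)) (DD ((0:ℝ), (1:ℝ)) A) (q.1.1, q.2 * q.1.2))
    (hs.comp (by fun_prop))

lemma LL_spec {A : ℝ × ℝ → ℝ} (hA : EvenS A) (τ r : ℝ) :
    r * LL A (τ, r) = DD ((0:ℝ), (1:ℝ)) A (τ, r) := by
  have hs := DD_smooth hA.smooth ((0:ℝ), (1:ℝ))
  have h0 : DD ((0:ℝ), (1:ℝ)) A (τ, 0) = 0 := by
    have := odd_DDr hA τ 0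
    simp at this; linarith
  have hd : ∀ θ : ℝ, HasDerivAt (fun θ => DD ((0:ℝ), (1:ℝ)) A (τ, θ * r))
      (r * DD ((0:ℝ), (1:ℝ)) (DD ((0:ℝ), (1:ℝ)) A) (τ, θ * r)) θ := by
    intro θ
    have h := (hasDerivAt_slice_r hs τ (θ * r)).comp θ ((hasDerivAt_id θ).mul_const r)
    exact h.congr_deriv (by simp; ring)
  have hcont : Continuous (fun θ : ℝ => r * DD ((0:ℝ), (1:ℝ)) (DD ((0:ℝ), (1:ℝ)) A) (τ, θ * r)) := by
    have := (DD_smooth hs ((0:ℝ), (1:ℝ))).continuous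
    fun_prop
  have h := intervalIntegral.integral_eq_sub_of_hasDerivAt (a := 0) (b := 1) (fun θ _ => hd θ)
    (hcont.intervalIntegrable _ _)
  rw [intervalIntegral.integral_of_le zero_le_one, ← integral_Icc_eq_integral_Ioc,
    integral_const_mul] at h
  simp [h0] at h
  simpa [LL] using h

lemma LL_unique {A B : ℝ × ℝ → ℝ} (hA : EvenS A) (hB : Continuous B) (τ : ℝ)
    (h : ∀ r, r * B (τ, r) = DD ((0:ℝ), (1:ℝ)) A (τ, r)) (r : ℝ) : B (τ, r) = LL A (τ, r) := by
  have hc : Continuous (fun r => B (τ, r) - LL A (τ, r)) := by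
    have := (LL_smooth hA.smooth).continuous
    fun_prop
  have hz : ∀ r, r ≠ 0 → B (τ, r) - LL A (τ, r) = 0 := by
    intro r hr
    have h1 := h r
    rw [← LL_spec hA] at h1
    have := mul_left_cancel₀ hr h1
    linarith
  have : B (τ, r) - LL A (τ, r) = 0 := by
    by_cases hr : r = 0
    · subst hr
      exact zero_of_punctured hc (eventually_mem_nhdsWithin.mono fun r hr => hz r hr)
    · exact hz r hr
  linarith

lemma LL_even {A : ℝ × ℝ → ℝ} (hA : EvenS A) : EvenS (LL A) := by
  refine ⟨LL_smooth hA.smooth, fun τ r => ?_⟩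
  refine LL_unique (B := fun p => LL A (p.1, -p.2)) hA ?_ τ ?_ r
  · have := (LL_smooth hA.smooth).continuous
    fun_prop
  · intro r
    have := LL_spec hA τ (-r)
    rw [odd_DDr hA] at this
    simp only; linarith

lemma DDt_even {A : ℝ × ℝ → ℝ} (hA : EvenS A) : EvenS (DD ((1:ℝ), (0:ℝ)) A) := by
  refine ⟨DD_smooth hA.smooth _, fun τ r => ?_⟩
  have h1 := hasDerivAt_slice_t hA.smooth τ (-r)
  have h2 := hasDerivAt_slice_t hA.smooth τ r
  simp only [hA.even] at h1
  exact h1.unique h2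

lemma DD_r_mul {B : ℝ × ℝ → ℝ} (hB : ContDiff ℝ ∞ B) :
    DD ((0:ℝ), (1:ℝ)) (fun p => p.2 * B p) = fun p => B p + p.2 * DD ((0:ℝ), (1:ℝ)) B p := by
  rw [DD_mul contDiff_snd hB]
  funext p
  simp [DD, fderiv_snd]

lemma LL_DDt {A : ℝ × ℝ → ℝ} (hA : EvenS A) :
    LL (DD ((1:ℝ), (0:ℝ)) A) = DD ((1:ℝ), (0:ℝ)) (LL A) := by
  funext ⟨τ, r⟩
  symm
  refine LL_unique (DDt_even hA) (DD_smooth (LL_smooth hA.smooth) _).continuous τ ?_ r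
  intro r
  rw [DD_comm hA.smooth]
  have : DD ((0:ℝ), (1:ℝ)) A = fun p => p.2 * LL A p := by
    funext ⟨τ, r⟩; exact (LL_spec hA τ r).symm
  rw [this, DD_mul contDiff_snd (LL_smooth hA.smooth)]
  simp [DD, fderiv_snd]

/-- radial wave equation in dimension m -/
def IsRW (m : ℝ) (A : ℝ × ℝ → ℝ) : Prop :=
  ∀ p, DD ((1:ℝ), (0:ℝ)) (DD ((1:ℝ), (0:ℝ)) A) p = p.2 * DD ((0:ℝ), (1:ℝ)) (LL A) p + m * LL A p

lemma DDr_eq {A : ℝ × ℝ → ℝ} (hA : EvenS A) : DD ((0:ℝ), (1:ℝ)) A = fun p => p.2 * LL A p := by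
  funext ⟨τ, r⟩; exact (LL_spec hA τ r).symm

lemma DDrr_eq {A : ℝ × ℝ → ℝ} (hA : EvenS A) :
    DD ((0:ℝ), (1:ℝ)) (DD ((0:ℝ), (1:ℝ)) A) = fun p => LL A p + p.2 * DD ((0:ℝ), (1:ℝ)) (LL A) p := by
  rw [DDr_eq hA, DD_r_mul (LL_smooth hA.smooth)]

lemma IsRW_step {m : ℝ} {A : ℝ × ℝ → ℝ} (hA : EvenS A) (h : IsRW m A) : IsRW (m + 2) (LL A) := by
  intro ⟨τ, r⟩
  have hLA := LL_even hA
  have hLLA := LL_even hLA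
  rw [← LL_DDt hA, ← LL_DDt (DDt_even hA)]
  symm
  refine LL_unique (B := fun p => p.2 * DD ((0:ℝ), (1:ℝ)) (LL (LL A)) p + (m+2) * LL (LL A) p)
    (DDt_even (DDt_even hA)) ?_ τ ?_ r
  · have := hLLA.smooth.continuous
    have := (DD_smooth hLLA.smooth ((0:ℝ), (1:ℝ))).continuous
    fun_prop
  · intro r
    have e : DD ((1:ℝ), (0:ℝ)) (DD ((1:ℝ), (0:ℝ)) A) =
        fun p => p.2 * DD ((0:ℝ), (1:ℝ)) (LL A) p + m * LL A p := funext h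
    have s1 := DD_smooth hLA.smooth ((0:ℝ), (1:ℝ))
    rw [e, DD_add (contDiff_snd.mul s1) (contDiff_const.mul hLA.smooth), DD_r_mul s1,
      DD_mul contDiff_const hLA.smooth, DDrr_eq hLA, DDr_eq hLA]
    simp [DD]
    ring

lemma IsRW_one {A : ℝ × ℝ → ℝ} (hA : EvenS A)
    (h : DD ((1:ℝ), (0:ℝ)) (DD ((1:ℝ), (0:ℝ)) A) = DD ((0:ℝ), (1:ℝ)) (DD ((0:ℝ), (1:ℝ)) A)) :
    IsRW 1 A := by
  intro p
  rw [h, DDrr_eq hA]; ring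

lemma iter_LL {A : ℝ × ℝ → ℝ} (hA : EvenS A) (k : ℕ) : EvenS (LL^[k] A) := by
  induction k with
  | zero => exact hA
  | succ k ih => rw [Function.iterate_succ_apply']; exact LL_even ih

lemma iter_RW {A : ℝ × ℝ → ℝ} (hA : EvenS A) (h : IsRW 1 A) (k : ℕ) : IsRW (2 * k + 1) (LL^[k] A) := by
  induction k with
  | zero => simpa using h
  | succ k ih =>
    rw [Function.iterate_succ_apply']
    have := IsRW_step (iter_LL hA k) ih
    convert this using 1
    push_cast; ring

lemma iter_DDt {A : ℝ × ℝ → ℝ} (hA : EvenS A) (k : ℕ) :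
    DD ((1:ℝ), (0:ℝ)) (LL^[k] A) = LL^[k] (DD ((1:ℝ), (0:ℝ)) A) := by
  induction k with
  | zero => rfl
  | succ k ih =>
    rw [Function.iterate_succ_apply', Function.iterate_succ_apply', ← LL_DDt (iter_LL hA k), ih]

lemma LL_slice {A B : ℝ × ℝ → ℝ} (hA : EvenS A) (hB : EvenS B) (τ : ℝ)
    (h : ∀ r, A (τ, r) = B (τ, r)) (r : ℝ) : LL A (τ, r) = LL B (τ, r) := by
  refine LL_unique hB (LL_smooth hA.smooth).continuous τ (fun r => ?_) r
  rw [LL_spec hA]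
  have h1 := hasDerivAt_slice_r hA.smooth τ r
  have h2 := hasDerivAt_slice_r hB.smooth τ r
  simp only [h] at h1
  exact h1.unique h2

lemma iter_slice {A B : ℝ × ℝ → ℝ} (hA : EvenS A) (hB : EvenS B) (τ : ℝ)
    (h : ∀ r, A (τ, r) = B (τ, r)) (k : ℕ) : ∀ r, (LL^[k] A) (τ, r) = (LL^[k] B) (τ, r) := by
  induction k with
  | zero => exact h
  | succ k ih =>
    rw [Function.iterate_succ_apply', Function.iterate_succ_apply']
    exact LL_slice (iter_LL hA k) (iter_LL hB k) τ ih

lemma LL_zero_on {A : ℝ × ℝ → ℝ} (hA : EvenS A) {O : Set (ℝ × ℝ)} (hO : IsOpen O)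
    (h : ∀ p ∈ O, DD ((0:ℝ), (1:ℝ)) A p = 0) : ∀ p ∈ O, LL A p = 0 := by
  rintro ⟨τ, r⟩ hp
  have hz : ∀ r, (τ, r) ∈ O → r ≠ 0 → LL A (τ, r) = 0 := by
    intro r hr hr0
    have := LL_spec hA τ r
    rw [h _ hr] at this
    simpa [hr0] using this
  have hc : Continuous (fun r => LL A (τ, r)) := by
    have := (LL_smooth hA.smooth).continuous
    fun_prop
  by_cases hr : r = 0
  · subst hr
    refine zero_of_punctured hc ?_
    have hO' : {r : ℝ | (τ, r) ∈ O} ∈ 𝓝 (0:ℝ) := by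
      have : IsOpen ((fun r : ℝ => (τ, r)) ⁻¹' O) := hO.preimage (by fun_prop)
      exact this.mem_nhds hp
    filter_upwards [nhdsWithin_le_nhds hO', eventually_mem_nhdsWithin] with r h1 h2 using hz r h1 h2
  · exact hz r hp hr

lemma iter_zero_on {A : ℝ × ℝ → ℝ} (hA : EvenS A) {O : Set (ℝ × ℝ)} (hO : IsOpen O)
    (h : ∀ p ∈ O, DD ((0:ℝ), (1:ℝ)) A p = 0) (k : ℕ) : ∀ p ∈ O, (LL^[k+1] A) p = 0 := by
  induction k with
  | zero => exact LL_zero_on hA hO h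
  | succ k ih =>
    rw [Function.iterate_succ_apply']
    exact LL_zero_on (iter_LL hA _) hO (DD_zero_on hO ih _)

/-! inverse of `LL` on compactly supported functions of `r` -/

lemma smooth_primitive {g : ℝ → ℝ} (hg : ContDiff ℝ ∞ g) : ContDiff ℝ ∞ (fun r => ∫ s in (0:ℝ)..r, g s) := by
  have hd : ∀ r, HasDerivAt (fun r => ∫ s in (0:ℝ)..r, g s) (g r) r := fun r =>
    intervalIntegral.integral_hasDerivAt_right (hg.continuous.intervalIntegrable _ _)
      (hg.continuous.stronglyMeasurableAtFilter _ _) hg.continuous.continuousAt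
  refine contDiff_infty_iff_deriv.2 ⟨fun r => (hd r).differentiableAt, ?_⟩
  have : deriv (fun r => ∫ s in (0:ℝ)..r, g s) = g := funext fun r => (hd r).deriv
  rwa [this]

lemma hasDerivAt_primitive {g : ℝ → ℝ} (hg : ContDiff ℝ ∞ g) (r : ℝ) :
    HasDerivAt (fun r => ∫ s in (0:ℝ)..r, g s) (g r) r :=
  intervalIntegral.integral_hasDerivAt_right (hg.continuous.intervalIntegrable _ _)
      (hg.continuous.stronglyMeasurableAtFilter _ _) hg.continuous.continuousAt

lemma primitive_neg (g : ℝ → ℝ) (r : ℝ) : ∫ s in (0:ℝ)..(-r), g s = - ∫ s in (0:ℝ)..r, g (-s) := by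
  rw [intervalIntegral.integral_comp_neg]
  rw [intervalIntegral.integral_symm]; simp

/-- even smooth supported in `[-ε, ε]` -/
structure EvenC (ε : ℝ) (g : ℝ → ℝ) : Prop where
  smooth : ContDiff ℝ ∞ g
  even : ∀ r, g (-r) = g r
  supp : ∀ r, ε ≤ |r| → g r = 0

lemma ext_even {ε : ℝ} {g : ℝ → ℝ} (hg : EvenC ε g) : EvenS (fun p => g p.2) :=
  ⟨hg.smooth.comp contDiff_snd, fun _ r => hg.even r⟩

lemma exists_J {ε : ℝ} (hε : 0 < ε) {g : ℝ → ℝ} (hg : EvenC ε g) :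
    ∃ G, EvenC ε G ∧ LL (fun p => G p.2) = fun p => g p.2 := by
  have hs : ContDiff ℝ ∞ (fun s => s * g s) := contDiff_id.mul hg.smooth
  set c := ∫ s in (0:ℝ)..ε, s * g s with hc
  have hG : EvenC ε (fun r => (∫ s in (0:ℝ)..r, s * g s) - c) := by
    have hev : ∀ r, (∫ s in (0:ℝ)..(-r), s * g s) - c = (∫ s in (0:ℝ)..r, s * g s) - c := by
      intro r
      rw [primitive_neg]
      simp [hg.even]
    refine ⟨(smooth_primitive hs).sub contDiff_const, hev, ?_⟩
    have hpos : ∀ r, ε ≤ r → (∫ s in (0:ℝ)..r, s * g s) - c = 0 := by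
      intro r hr
      rw [hc, intervalIntegral.integral_interval_sub_left (hs.continuous.intervalIntegrable _ _)
        (hs.continuous.intervalIntegrable _ _)]
      rw [intervalIntegral.integral_congr (g := fun _ => 0)]
      · simp
      · intro s hs
        rw [Set.uIcc_of_le hr] at hs
        have : g s = 0 := hg.supp s (hs.1.trans (le_abs_self s))
        simp [this]
    intro r hr
    rcases le_total 0 r with h | h
    · rw [abs_of_nonneg h] at hr; exact hpos r hr
    · rw [abs_of_nonpos h] at hr
      have := hpos (-r) hr
      rw [← hev r]; exact this
  refine ⟨_, hG, ?_⟩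
  funext ⟨τ, r⟩
  symm
  refine LL_unique (B := fun p => g p.2) (ext_even hG) (hg.smooth.continuous.comp continuous_snd) τ ?_ r
  intro r
  have h1 := hasDerivAt_slice_r (ext_even hG).smooth τ r
  have h2 := (hasDerivAt_primitive hs r).sub_const c
  exact h2.unique h1

lemma exists_Jk {ε : ℝ} (hε : 0 < ε) (k : ℕ) : ∀ {g : ℝ → ℝ}, EvenC ε g →
    ∃ G, EvenC ε G ∧ LL^[k] (fun p => G p.2) = fun p => g p.2 := by
  induction k with
  | zero => intro g hg; exact ⟨g, hg, rfl⟩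
  | succ k ih =>
    intro g hg
    obtain ⟨G1, h1, e1⟩ := exists_J hε hg
    obtain ⟨G, h, e⟩ := ih h1
    exact ⟨G, h, by rw [Function.iterate_succ_apply', e, e1]⟩

/-- The radial kernel. -/
lemma exists_radial {ε : ℝ} (hε : 0 < ε) (k : ℕ) {g : ℝ → ℝ} (hg : EvenC ε g) :
    ∃ A : ℝ × ℝ → ℝ, EvenS A ∧ IsRW (2 * (k+1 : ℕ) + 1) A ∧ (∀ r, A (0, r) = 0) ∧
      (∀ r, DD ((1:ℝ), (0:ℝ)) A (0, r) = g r) ∧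
      (∀ τ r, |τ| + ε < |r| → A (τ, r) = 0) ∧ (∀ τ r, |r| + ε < |τ| → A (τ, r) = 0) := by
  obtain ⟨G, hG, eG⟩ := exists_Jk hε (k+1) hg
  set H : ℝ → ℝ := fun r => ∫ s in (0:ℝ)..r, G s with hH
  have sH : ContDiff ℝ ∞ H := smooth_primitive hG.smooth
  have dH : ∀ r, HasDerivAt H (G r) r := hasDerivAt_primitive hG.smooth
  have oH : ∀ r, H (-r) = - H r := by
    intro r; simp only [hH]; rw [primitive_neg]; simp [hG.even]
  set B : ℝ × ℝ → ℝ := fun p => (1/2) * (H (p.2 + p.1) - H (p.2 - p.1)) with hB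
  have eB : EvenS B := by
    refine ⟨by rw [hB]; fun_prop, fun τ r => ?_⟩
    simp only [hB]
    rw [show -r + τ = -(r - τ) by ring, show -r - τ = -(r + τ) by ring, oH, oH]; ring
  have gen : ∀ (Φ φ : ℝ → ℝ), ContDiff ℝ ∞ Φ → (∀ r, HasDerivAt Φ (φ r) r) → ∀ c : ℝ,
      DD ((1:ℝ), (0:ℝ)) (fun p : ℝ × ℝ => (1/2) * (Φ (p.2 + p.1) + c * Φ (p.2 - p.1))) =
        (fun p => (1/2) * (φ (p.2 + p.1) + (-c) * φ (p.2 - p.1))) ∧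
      DD ((0:ℝ), (1:ℝ)) (fun p : ℝ × ℝ => (1/2) * (Φ (p.2 + p.1) + c * Φ (p.2 - p.1))) =
        (fun p => (1/2) * (φ (p.2 + p.1) + c * φ (p.2 - p.1))) := by
    intro Φ φ sΦ dΦ c
    have ss : ContDiff ℝ ∞ (fun p : ℝ × ℝ => (1/2) * (Φ (p.2 + p.1) + c * Φ (p.2 - p.1))) := by fun_prop
    constructor
    · funext ⟨τ, r⟩
      refine (hasDerivAt_slice_t ss τ r).unique ?_
      have h1 := (dΦ (r + τ)).comp τ ((hasDerivAt_id τ).const_add r)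
      have h2 := (dΦ (r - τ)).comp τ ((hasDerivAt_id τ).const_sub r)
      have h3 := (h1.add (h2.const_mul c)).const_mul (1/2)
      exact h3.congr_deriv (by ring)
    · funext ⟨τ, r⟩
      refine (hasDerivAt_slice_r ss τ r).unique ?_
      have h1 := (dΦ (r + τ)).comp r ((hasDerivAt_id r).add_const τ)
      have h2 := (dΦ (r - τ)).comp r ((hasDerivAt_id r).sub_const τ)
      have h3 := (h1.add (h2.const_mul c)).const_mul (1/2)
      exact h3.congr_deriv (by ring)
  have hB' : B = fun p : ℝ × ℝ => (1/2) * (H (p.2 + p.1) + (-1) * H (p.2 - p.1)) := by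
    rw [hB]; funext p; ring
  have dG : ∀ r, HasDerivAt G (deriv G r) r := fun r => (sdiff hG.smooth r).hasDerivAt
  have g1 := gen H G sH dH (-1)
  rw [← hB'] at g1
  have w : IsRW 1 B := by
    refine IsRW_one eB ?_
    rw [g1.1, g1.2, (gen G _ hG.smooth dG _).1, (gen G _ hG.smooth dG _).2]
    simp
  have zero : ∀ (O : Set (ℝ × ℝ)), IsOpen O → (∀ p ∈ O, ε ≤ |p.2 + p.1| ∧ ε ≤ |p.2 - p.1|) →
      ∀ p ∈ O, (LL^[k+1] B) p = 0 := by
    intro O hO h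
    refine iter_zero_on eB hO ?_ k
    intro p hp
    rw [g1.2]
    simp [hG.supp _ (h p hp).1, hG.supp _ (h p hp).2]
  refine ⟨LL^[k+1] B, iter_LL eB _, iter_RW eB w (k+1), ?_, ?_, ?_, ?_⟩
  · intro r
    have z : EvenS (fun _ : ℝ × ℝ => (0:ℝ)) := ⟨contDiff_const, fun _ _ => rfl⟩
    rw [iter_slice eB z 0 (by intro r; simp [hB]) (k+1) r]
    have : ∀ n : ℕ, (LL^[n] (fun _ : ℝ × ℝ => (0:ℝ))) = fun _ => 0 := by
      intro n
      induction n with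
      | zero => rfl
      | succ n ih =>
        rw [Function.iterate_succ_apply', ih]
        have z0 : ∀ v : ℝ × ℝ, DD v (fun _ : ℝ × ℝ => (0:ℝ)) = fun _ => 0 := by
          intro v; funext p; simp [DD]
        funext p; simp [LL, z0]
    rw [this]
  · intro r
    rw [iter_DDt eB, iter_slice (DDt_even eB) (ext_even hG) 0 _ (k+1) r, eG]
    intro r
    rw [g1.1]; simp; ring
  · intro τ r h
    refine zero {p | |p.1| + ε < |p.2|} (isOpen_lt (by fun_prop) (by fun_prop)) ?_ (τ, r) h
    rintro ⟨τ, r⟩ h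
    simp only [Set.mem_ofPred_eq] at h ⊢
    constructor
    · have := abs_sub_abs_le_abs_sub r (-τ)
      rw [abs_neg, sub_neg_eq_add] at this; linarith
    · have := abs_sub_abs_le_abs_sub r τ
      linarith
  · intro τ r h
    refine zero {p | |p.2| + ε < |p.1|} (isOpen_lt (by fun_prop) (by fun_prop)) ?_ (τ, r) h
    rintro ⟨τ, r⟩ h
    simp only [Set.mem_ofPred_eq] at h ⊢
    constructor
    · have := abs_sub_abs_le_abs_sub τ (-r)
      rw [abs_neg, sub_neg_eq_add, add_comm τ r] at this; linarith
    · have := abs_sub_abs_le_abs_sub τ r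
      rw [abs_sub_comm] at this
      linarith

end WaveAux


open MeasureTheory Filter Topology
open scoped ContDiff

namespace WaveAux

/-- Euclidean space. -/
abbrev Ed (d : ℕ) := EuclideanSpace ℝ (Fin d)

/-- time direction -/
noncomputable def et (d : ℕ) : ℝ × Ed d := (1, 0)
/-- space directions -/
noncomputable def ex {d : ℕ} (i : Fin d) : ℝ × Ed d := (0, EuclideanSpace.single i (1:ℝ))

/-- wave equation -/
def IsWave {d : ℕ} (U : ℝ × Ed d → ℝ) : Prop :=
  ∀ p, DD (et d) (DD (et d) U) p = ∑ i, DD (ex i) (DD (ex i) U) p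

/-- radial lift -/
noncomputable def lift (d : ℕ) (A : ℝ × ℝ → ℝ) : ℝ × Ed d → ℝ := fun p => A (p.1, ‖p.2‖)

lemma lift_hasFDerivAt {d : ℕ} {A : ℝ × ℝ → ℝ} (hA : EvenS A) (p : ℝ × Ed d) :
    HasFDerivAt (lift d A) (lift d (DD ((1:ℝ), (0:ℝ)) A) p • ContinuousLinearMap.fst ℝ ℝ (Ed d) +
      lift d (LL A) p • (innerSL ℝ p.2).comp (ContinuousLinearMap.snd ℝ ℝ (Ed d))) p := by
  obtain ⟨τ, x⟩ := p
  have hA1 := (sdiff hA.smooth (τ, ‖x‖)).hasFDerivAt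
  have dec : ∀ (q : ℝ × ℝ) (a b : ℝ), fderiv ℝ A q (a, b) =
      a * DD ((1:ℝ), (0:ℝ)) A q + b * DD ((0:ℝ), (1:ℝ)) A q := by
    intro q a b
    have : (a, b) = a • ((1:ℝ), (0:ℝ)) + b • ((0:ℝ), (1:ℝ)) := by simp
    rw [this, map_add, map_smul, map_smul]; rfl
  by_cases hx : x = 0
  · subst hx
    rw [hasFDerivAt_iff_isLittleO] at hA1 ⊢
    have ht : Tendsto (fun q : ℝ × Ed d => (q.1, ‖q.2‖)) (𝓝 (τ, 0)) (𝓝 (τ, ‖(0 : Ed d)‖)) := by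
      have : Continuous (fun q : ℝ × Ed d => (q.1, ‖q.2‖)) := by fun_prop
      exact this.tendsto (τ, 0)
    have h := hA1.comp_tendsto ht
    have hO : ((fun x' : ℝ × ℝ => x' - (τ, ‖(0 : Ed d)‖)) ∘ fun q : ℝ × Ed d => (q.1, ‖q.2‖))
        =O[𝓝 (τ, 0)] (fun q : ℝ × Ed d => q - (τ, 0)) := by
      refine Asymptotics.IsBigO.of_bound 1 (Eventually.of_forall fun q => ?_)
      simp [Prod.norm_def]
    refine (h.trans_isBigO hO).congr' ?_ (EventuallyEq.refl _ _)
    refine Eventually.of_forall fun q => ?_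
    have h0 := LL_spec hA τ 0
    simp [lift, dec, ← h0]
    ring
  · have hn : HasFDerivAt (fun q : ℝ × Ed d => ‖q.2‖)
        ((‖x‖⁻¹ • innerSL ℝ x).comp (ContinuousLinearMap.snd ℝ ℝ (Ed d))) (τ, x) := by
      have h1 : HasFDerivAt (fun y : Ed d => ‖y‖) (‖x‖⁻¹ • innerSL ℝ x) x := by
        have h2 := (hasStrictFDerivAt_norm_sq x).hasFDerivAt.sqrt (by positivity)
        have h3 : (fun y : Ed d => √(‖y‖ ^ 2)) = fun y => ‖y‖ := by
          funext y; rw [Real.sqrt_sq (norm_nonneg y)]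
        rw [h3, Real.sqrt_sq (norm_nonneg x)] at h2
        refine h2.congr_fderiv ?_
        ext v
        have : ‖x‖ ≠ 0 := norm_ne_zero_iff.2 hx
        simp
        field_simp
      exact h1.comp (τ, x) (hasFDerivAt_snd)
    have h := hA1.comp (τ, x) ((hasFDerivAt_fst (p := (τ, x))).prodMk hn)
    refine HasFDerivAt.congr_fderiv (f := lift d A) h ?_
    have hn0 : ‖x‖ ≠ 0 := norm_ne_zero_iff.2 hx
    have hs := LL_spec hA τ ‖x‖
    apply ContinuousLinearMap.ext
    rintro ⟨a, y⟩
    simp only [ContinuousLinearMap.comp_apply, ContinuousLinearMap.prod_apply, dec, ← hs]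
    simp [lift]
    field_simp

lemma lift_DD {d : ℕ} {A : ℝ × ℝ → ℝ} (hA : EvenS A) (v : ℝ × Ed d) :
    DD v (lift d A) = fun p => lift d (DD ((1:ℝ), (0:ℝ)) A) p * v.1 + lift d (LL A) p * inner ℝ p.2 v.2 := by
  funext p
  rw [DD, (lift_hasFDerivAt hA p).fderiv]
  simp

lemma lift_smooth {d : ℕ} {A : ℝ × ℝ → ℝ} (hA : EvenS A) : ContDiff ℝ ∞ (lift d A) := by
  refine contDiff_nat_of_DD (fun F => ∃ A, EvenS A ∧ F = lift d A) ?_ ?_ _ ⟨A, hA, rfl⟩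
  · rintro F ⟨A, hA, rfl⟩ p
    exact (lift_hasFDerivAt hA p).differentiableAt
  · rintro n F ⟨A, hA, rfl⟩ ih v
    rw [lift_DD hA]
    have h1 := ih _ ⟨_, DDt_even hA, rfl⟩
    have h2 := ih _ ⟨_, LL_even hA, rfl⟩
    refine (h1.mul contDiff_const).add (h2.mul ?_)
    exact contDiff_snd.inner ℝ contDiff_const

lemma lift_wave {d : ℕ} {A : ℝ × ℝ → ℝ} (hA : EvenS A) (h : IsRW d A) : IsWave (lift d A) := by
  have ht : ∀ {B : ℝ × ℝ → ℝ}, EvenS B → DD (et d) (lift d B) = lift d (DD ((1:ℝ), (0:ℝ)) B) := by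
    intro B hB
    rw [lift_DD hB]; funext p; simp [et]
  have hx : ∀ {B : ℝ × ℝ → ℝ}, EvenS B → ∀ i, DD (ex i) (lift d B) = fun p => lift d (LL B) p * p.2 i := by
    intro B hB i
    rw [lift_DD hB]; funext p; simp [ex, EuclideanSpace.inner_single_right]
  have sx : ∀ i : Fin d, ContDiff ℝ ∞ (fun p : ℝ × Ed d => p.2 i) := by
    intro i
    fun_prop
  have dx : ∀ (i : Fin d) (p : ℝ × Ed d), DD (ex i) (fun p : ℝ × Ed d => p.2 i) p = 1 := by
    intro i p
    have : (fun p : ℝ × Ed d => p.2 i) =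
      fun p => ((EuclideanSpace.proj i : Ed d →L[ℝ] ℝ).comp (ContinuousLinearMap.snd ℝ ℝ (Ed d))) p := by
      funext p; simp
    unfold DD
    rw [this, ContinuousLinearMap.fderiv]
    simp [ex]
  intro p
  rw [ht hA, ht (DDt_even hA)]
  have : ∀ i : Fin d, DD (ex i) (DD (ex i) (lift d A)) p =
      lift d (LL (LL A)) p * (p.2 i) ^ 2 + lift d (LL A) p := by
    intro i
    rw [hx hA, DD_mul (lift_smooth (LL_even hA)) (sx i), hx (LL_even hA)]
    simp only [dx]
    ring
  simp only [this]
  rw [Finset.sum_add_distrib, ← Finset.mul_sum]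
  have hn : ∑ i, (p.2 i) ^ 2 = ‖p.2‖ ^ 2 := by
    rw [EuclideanSpace.norm_sq_eq]; simp
  rw [hn]
  have h1 := h (p.1, ‖p.2‖)
  simp only [lift]
  rw [h1, ← LL_spec (LL_even hA)]
  simp; ring

lemma exists_kernel {d : ℕ} (hd : 3 ≤ d) (hodd : Odd d) {ε : ℝ} (hε : 0 < ε) :
    ∃ K : ℝ × Ed d → ℝ, ContDiff ℝ ∞ K ∧ IsWave K ∧ (∀ x, K (0, x) = 0) ∧
      (∀ x, 0 ≤ DD (et d) K (0, x)) ∧ (∫ x, DD (et d) K (0, x) = 1) ∧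
      (∀ x, ε < ‖x‖ → DD (et d) K (0, x) = 0) ∧
      (∀ τ x, |τ| + ε < ‖x‖ → K (τ, x) = 0) ∧ (∀ τ x, ‖x‖ + ε < |τ| → K (τ, x) = 0) := by
  obtain ⟨m, hm⟩ := hodd
  obtain ⟨k, rfl⟩ : ∃ k, m = k + 1 := ⟨m - 1, by omega⟩
  let b : ContDiffBump (0:ℝ) := ⟨ε/2, ε, by positivity, by linarith⟩
  have sb : EvenC ε b := by
    refine ⟨b.contDiff, fun r => b.neg r, fun r hr => b.zero_of_le_dist ?_⟩
    simpa [b] using hr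
  -- normalisation
  set c := ∫ x : Ed d, b ‖x‖ with hc
  have sbn : Continuous (fun x : Ed d => b ‖x‖) := b.continuous.comp continuous_norm
  have hcs : HasCompactSupport (fun x : Ed d => b ‖x‖) := by
    refine HasCompactSupport.intro (isCompact_closedBall (0 : Ed d) ε) ?_
    intro x hx
    apply sb.supp
    simp at hx
    rw [abs_of_nonneg (norm_nonneg x)]; exact hx.le
  have cpos : 0 < c := by
    refine (sbn.integral_pos_of_hasCompactSupport_nonneg_nonzero hcs (fun x => b.nonneg) (x := 0) ?_)
    have : b ‖(0 : Ed d)‖ = 1 := by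
      apply b.one_of_mem_closedBall; simp [b]; positivity
    rw [this]; exact one_ne_zero
  have sg : EvenC ε (fun r => c⁻¹ * b r) :=
    ⟨contDiff_const.mul sb.smooth, fun r => by rw [sb.even], fun r hr => by rw [sb.supp r hr, mul_zero]⟩
  obtain ⟨A, hA, hw, h0, h1, h2, h3⟩ := exists_radial hε k sg
  have ht : ∀ x, DD (et d) (lift d A) (0, x) = c⁻¹ * b ‖x‖ := by
    intro x
    rw [lift_DD hA]; simp [et, lift, h1]
  have hw' : IsRW (d : ℝ) A := by
    have e : (d : ℝ) = 2 * ((k + 1 : ℕ) : ℝ) + 1 := by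
      have := congrArg (fun n : ℕ => (n : ℝ)) hm
      rw [this]; push_cast; ring
    rw [e]; exact hw
  have hz : ∀ x : Ed d, lift d A (0, x) = 0 := by
    intro x; unfold lift; exact h0 _
  refine ⟨lift d A, lift_smooth hA, lift_wave hA hw', hz, ?_, ?_, ?_, ?_, ?_⟩
  · intro x; rw [ht]; exact mul_nonneg (inv_nonneg.mpr cpos.le) b.nonneg
  · simp only [ht]
    rw [integral_const_mul, ← hc]; field_simp
  · intro x hx
    rw [ht, sb.supp, mul_zero]
    rw [abs_of_nonneg (norm_nonneg x)]; exact hx.le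
  · intro τ x h
    exact h2 τ _ (by rwa [abs_of_nonneg (norm_nonneg x)])
  · intro τ x h
    exact h3 τ _ (by rwa [abs_of_nonneg (norm_nonneg x)])

/-- spatial convolution -/
noncomputable def cv {d : ℕ} (S : Set (Ed d)) (h : Ed d → ℝ) (K : ℝ × Ed d → ℝ) : ℝ × Ed d → ℝ :=
  fun p => ∫ y in S, h y * K (p - (0, y))

lemma cv_smooth {d : ℕ} {S : Set (Ed d)} (hS : IsCompact S) {h : Ed d → ℝ} (hh : ContDiff ℝ ∞ h)
    {K : ℝ × Ed d → ℝ} (hK : ContDiff ℝ ∞ K) : ContDiff ℝ ∞ (cv S h K) := by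
  exact param_smooth (P := ℝ × Ed d) (Y := Ed d) volume hS
    (F := fun q => h q.2 * K (q.1 - (0, q.2))) (by fun_prop)

lemma cv_DD {d : ℕ} {S : Set (Ed d)} (hS : IsCompact S) {h : Ed d → ℝ} (hh : ContDiff ℝ ∞ h)
    {K : ℝ × Ed d → ℝ} (hK : ContDiff ℝ ∞ K) (v : ℝ × Ed d) : DD v (cv S h K) = cv S h (DD v K) := by
  have := param_DD (P := ℝ × Ed d) (Y := Ed d) volume hS
    (F := fun q => h q.2 * K (q.1 - (0, q.2))) (by fun_prop) v
  unfold cv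
  rw [this]
  funext p
  congr 1
  funext y
  rw [DD_mul (by fun_prop) (by fun_prop)]
  have e1 : DD (v, (0 : Ed d)) (fun q : (ℝ × Ed d) × Ed d => h q.2) (p, y) = 0 := by
    have h1 : HasFDerivAt (fun q : (ℝ × Ed d) × Ed d => h q.2) _ (p, y) :=
      (sdiff hh y).hasFDerivAt.comp (p, y) hasFDerivAt_snd
    unfold DD; rw [h1.fderiv]; simp
  have e2 : DD (v, (0 : Ed d)) (fun q : (ℝ × Ed d) × Ed d => K (q.1 - (0, q.2))) (p, y) =
      DD v K (p - (0, y)) := by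
    have h0 : HasFDerivAt (fun q : (ℝ × Ed d) × Ed d => q.1 - ((0:ℝ), q.2))
        (ContinuousLinearMap.fst ℝ (ℝ × Ed d) (Ed d) -
          (ContinuousLinearMap.inr ℝ ℝ (Ed d)).comp (ContinuousLinearMap.snd ℝ (ℝ × Ed d) (Ed d))) (p, y) :=
      ((ContinuousLinearMap.fst ℝ (ℝ × Ed d) (Ed d) -
          (ContinuousLinearMap.inr ℝ ℝ (Ed d)).comp (ContinuousLinearMap.snd ℝ (ℝ × Ed d) (Ed d)))).hasFDerivAt
    have h1 : HasFDerivAt (fun q : (ℝ × Ed d) × Ed d => K (q.1 - (0, q.2))) _ (p, y) :=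
      (sdiff hK (p - (0, y))).hasFDerivAt.comp (p, y) h0
    unfold DD; rw [h1.fderiv]; simp [show ((0:ℝ), (0 : Ed d)) = 0 from rfl]
  simp [e1, e2]

/-- Existence of compactly supported waves with data `(0, ≈h)` and the strong Huygens principle. -/
lemma exists_wave {d : ℕ} (hd : 3 ≤ d) (hodd : Odd d) {ρ : ℝ} {h : Ed d → ℝ} (hh : ContDiff ℝ ∞ h)
    (hs : ∀ x, ρ < ‖x‖ → h x = 0) {δ : ℝ} (hδ : 0 < δ) :
    ∃ W : ℝ × Ed d → ℝ, ContDiff ℝ ∞ W ∧ IsWave W ∧ (∀ x, W (0, x) = 0) ∧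
      (∀ x, |DD (et d) W (0, x) - h x| ≤ δ) ∧
      (∀ p : ℝ × Ed d, ρ + δ + |p.1| < ‖p.2‖ → W p = 0) ∧
      (∀ p : ℝ × Ed d, ‖p.2‖ + ρ + δ < |p.1| → W p = 0) := by
  set S := Metric.closedBall (0 : Ed d) ρ with hSdef
  have hS : IsCompact S := isCompact_closedBall _ _
  have hcs : HasCompactSupport h := by
    refine HasCompactSupport.intro hS fun x hx => hs x ?_
    simpa [hSdef] using hx
  have huc := hcs.uniformContinuous_of_continuous hh.continuous
  obtain ⟨ε₀, hε₀, hε₀'⟩ := Metric.uniformContinuous_iff.1 huc δ hδ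
  set ε := min (ε₀/2) δ with hεd
  have hε : 0 < ε := by positivity
  obtain ⟨K, sK, wK, K0, K1, K2, K3, K4, K5⟩ := exists_kernel hd hodd hε
  refine ⟨cv S h K, cv_smooth hS hh sK, ?_, ?_, ?_, ?_, ?_⟩
  · intro p
    simp only [cv_DD hS hh sK, cv_DD hS hh (DD_smooth sK _)]
    unfold cv
    simp only [wK _]
    rw [← integral_finsetSum]
    · congr 1; funext y; rw [Finset.mul_sum]
    · intro i _
      have : Continuous (fun y => h y * DD (ex i) (DD (ex i) K) (p - (0, y))) := by
        have h1 := (DD_smooth (DD_smooth sK (ex i)) (ex i)).continuous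
        have h2 := hh.continuous
        fun_prop
      exact this.continuousOn.integrableOn_compact hS
  · intro x
    unfold cv
    simp [K0]
  · intro x
    rw [cv_DD hS hh sK]
    unfold cv
    set η := fun x => DD (et d) K (0, x) with hη
    have cη : Continuous η := by
      have := (DD_smooth sK (et d)).continuous
      fun_prop
    have e1 : ∫ y in S, h y * DD (et d) K ((0, x) - (0, y)) = ∫ y, h y * η (x - y) := by
      rw [setIntegral_eq_integral_of_forall_compl_eq_zero]
      · simp [hη]
      · intro y hy
        rw [hs y (by simpa [hSdef] using hy), zero_mul]
    have i0 : Integrable (fun y => η (x - y)) := by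
      refine Continuous.integrable_of_hasCompactSupport (by fun_prop) ?_
      refine HasCompactSupport.intro (isCompact_closedBall x ε) fun y hy => K3 _ ?_
      rw [Metric.mem_closedBall, dist_comm, dist_eq_norm] at hy
      linarith
    have i1 : Integrable (fun y => h y * η (x - y)) := by
      have := hh.continuous
      exact Continuous.integrable_of_hasCompactSupport (by fun_prop) hcs.mul_right
    have e2 : h x = ∫ y, h x * η (x - y) := by
      rw [integral_const_mul, integral_sub_left_eq_self, K2, mul_one]
    rw [e1, e2, ← integral_sub i1 (i0.const_mul _), ← Real.norm_eq_abs]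
    have e3 : δ = ∫ y, δ * η (x - y) := by
      rw [integral_const_mul, integral_sub_left_eq_self, K2, mul_one]
    rw [e3]
    refine norm_integral_le_of_norm_le (i0.const_mul _) (Eventually.of_forall fun y => ?_)
    rw [← sub_mul, norm_mul, Real.norm_of_nonneg (K1 (x - y))]
    by_cases hy : ε < ‖x - y‖
    · simp [hη, K3 _ hy]
    · refine mul_le_mul_of_nonneg_right ?_ (K1 _)
      have : dist y x < ε₀ := by
        rw [dist_comm, dist_eq_norm]
        have : ε ≤ ε₀/2 := min_le_left _ _
        linarith
      exact (hε₀' this).le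
  · rintro ⟨τ, x⟩ hp
    unfold cv
    refine setIntegral_eq_zero_of_forall_eq_zero fun y hy => ?_
    have hy' : ‖y‖ ≤ ρ := by simpa [hSdef] using hy
    have : ε ≤ δ := min_le_right _ _
    have h3 : ‖x‖ ≤ ‖x - y‖ + ‖y‖ := by simpa using norm_add_le (x - y) y
    simp only at hp
    rw [Prod.mk_sub_mk, K4, mul_zero]
    simp only [sub_zero]; linarith
  · rintro ⟨τ, x⟩ hp
    unfold cv
    refine setIntegral_eq_zero_of_forall_eq_zero fun y hy => ?_
    have hy' : ‖y‖ ≤ ρ := by simpa [hSdef] using hy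
    have : ε ≤ δ := min_le_right _ _
    have h3 := norm_sub_le x y
    simp only at hp
    rw [Prod.mk_sub_mk, K5, mul_zero]
    simp only [sub_zero]; linarith

end WaveAux


open MeasureTheory Filter Topology
open scoped ContDiff

namespace WaveAux

/-- bounded support -/
def BS {d : ℕ} (w : Ed d → ℝ) : Prop := ∃ R : ℝ, ∀ x, R < ‖x‖ → w x = 0

lemma BS.integrable {d : ℕ} {w : Ed d → ℝ} (h : BS w) (hw : Continuous w) : Integrable w := by
  obtain ⟨R, hR⟩ := h
  refine hw.integrable_of_hasCompactSupport (HasCompactSupport.intro (isCompact_closedBall (0 : Ed d) R) ?_)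
  intro x hx
  exact hR x (by simpa using hx)

lemma BS.mul_left {d : ℕ} {w : Ed d → ℝ} (h : BS w) (f : Ed d → ℝ) : BS (fun x => f x * w x) := by
  obtain ⟨R, hR⟩ := h
  exact ⟨R, fun x hx => by simp [hR x hx]⟩

lemma BS.mul_right {d : ℕ} {w : Ed d → ℝ} (h : BS w) (f : Ed d → ℝ) : BS (fun x => w x * f x) := by
  obtain ⟨R, hR⟩ := h
  exact ⟨R, fun x hx => by simp [hR x hx]⟩

lemma BS.sq {d : ℕ} {w : Ed d → ℝ} (h : BS w) : BS (fun x => w x ^ 2) := by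
  obtain ⟨R, hR⟩ := h
  exact ⟨R, fun x hx => by simp [hR x hx]⟩

lemma BS.DD {d : ℕ} {w : Ed d → ℝ} (h : BS w) (v : Ed d) : BS (DD v w) := by
  obtain ⟨R, hR⟩ := h
  exact ⟨R, DD_zero_on (O := {x | R < ‖x‖}) (isOpen_lt continuous_const continuous_norm) hR v⟩

lemma ibp {d : ℕ} {f g : Ed d → ℝ} (hf : ContDiff ℝ ∞ f) (hg : ContDiff ℝ ∞ g) (hs : BS g) (v : Ed d) :
    ∫ x, f x * DD v g x = - ∫ x, DD v f x * g x := by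
  refine integral_mul_fderiv_eq_neg_fderiv_mul_of_integrable ?_ ?_ ?_ ?_ ?_
  · exact (hs.mul_left (DD v f)).integrable ((DD_smooth hf v).continuous.mul hg.continuous)
  · exact ((hs.DD v).mul_left f).integrable (hf.continuous.mul (DD_smooth hg v).continuous)
  · exact (hs.mul_left f).integrable (hf.continuous.mul hg.continuous)
  · exact fun x _ => sdiff hf x
  · exact fun x _ => sdiff hg x

/-- unit vectors -/
noncomputable def ei {d : ℕ} (i : Fin d) : Ed d := EuclideanSpace.single i (1:ℝ)

lemma sl_smooth {d : ℕ} {U : ℝ × Ed d → ℝ} (hU : ContDiff ℝ ∞ U) (s : ℝ) :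
    ContDiff ℝ ∞ (fun x => U (s, x)) := hU.comp (by fun_prop)

lemma sl_DD {d : ℕ} {U : ℝ × Ed d → ℝ} (hU : ContDiff ℝ ∞ U) (s : ℝ) (i : Fin d) :
    DD (ei i) (fun x => U (s, x)) = fun x => DD (ex i) U (s, x) := by
  funext x
  have := (sdiff hU (s, x)).hasFDerivAt.comp x (hasFDerivAt_prodMk_right s x)
  have h2 := this.fderiv
  unfold DD
  simp only [Function.comp_def] at h2
  rw [h2]
  simp [ex, ei]

/-- supported in forward/backward cone -/
def SuppIn {d : ℕ} (ρ : ℝ) (W : ℝ × Ed d → ℝ) : Prop := ∀ p, ρ + |p.1| < ‖p.2‖ → W p = 0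

lemma SuppIn.DD {d : ℕ} {ρ : ℝ} {W : ℝ × Ed d → ℝ} (h : SuppIn ρ W) (v : ℝ × Ed d) : SuppIn ρ (DD v W) :=
  DD_zero_on (O := {p : ℝ × Ed d | ρ + |p.1| < ‖p.2‖}) (isOpen_lt (by fun_prop) (by fun_prop)) h v

lemma SuppIn.bs {d : ℕ} {ρ : ℝ} {W : ℝ × Ed d → ℝ} (h : SuppIn ρ W) (s : ℝ) : BS (fun x => W (s, x)) :=
  ⟨ρ + |s|, fun x hx => h (s, x) hx⟩

lemma IsWave.DD {d : ℕ} {U : ℝ × Ed d → ℝ} (hU : ContDiff ℝ ∞ U) (h : IsWave U) (v : ℝ × Ed d) :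
    IsWave (DD v U) := by
  intro p
  have h' : WaveAux.DD (et d) (WaveAux.DD (et d) U) = fun p => ∑ i, WaveAux.DD (ex i) (WaveAux.DD (ex i) U) p := funext h
  rw [DD_comm hU, DD_comm (DD_smooth hU _), h', DD_sum _ (fun i => DD_smooth (DD_smooth hU _) _)]
  refine Finset.sum_congr rfl fun i _ => ?_
  rw [DD_comm hU (ex i) v, DD_comm (DD_smooth hU _) (ex i) v]

/-- time translation -/
def sh {d : ℕ} (T : ℝ) (U : ℝ × Ed d → ℝ) : ℝ × Ed d → ℝ := fun p => U (p + (T, 0))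

lemma sh_smooth {d : ℕ} {U : ℝ × Ed d → ℝ} (hU : ContDiff ℝ ∞ U) (T : ℝ) : ContDiff ℝ ∞ (sh T U) := by
  unfold sh; exact hU.comp (by fun_prop)

lemma sh_DD {d : ℕ} (U : ℝ × Ed d → ℝ) (T : ℝ) (v : ℝ × Ed d) : DD v (sh T U) = sh T (DD v U) := by
  funext p
  unfold sh DD
  rw [fderiv_comp_add_right]

lemma sh_wave {d : ℕ} {U : ℝ × Ed d → ℝ} (h : IsWave U) (T : ℝ) : IsWave (sh T U) := by
  intro p
  simp only [sh_DD]
  exact h _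

/-- the symplectic pairing -/
noncomputable def Pair {d : ℕ} (U W : ℝ × Ed d → ℝ) (s : ℝ) : ℝ :=
  ∫ x, (DD (et d) U (s, x) * W (s, x) - U (s, x) * DD (et d) W (s, x))

lemma int_DD_zero {d : ℕ} {w : Ed d → ℝ} (hw : ContDiff ℝ ∞ w) (hs : BS w) (v : Ed d) :
    ∫ x, DD v w x = 0 := by
  have := ibp (f := fun _ => 1) contDiff_const hw hs v
  have h0 : DD v (fun _ : Ed d => (1:ℝ)) = fun _ => 0 := by
    funext x; unfold DD; simp
  simpa [h0] using this

lemma pair_const {d : ℕ} {U W : ℝ × Ed d → ℝ} (hU : ContDiff ℝ ∞ U) (hW : ContDiff ℝ ∞ W)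
    (wU : IsWave U) (wW : IsWave W) {ρ : ℝ} (hs : SuppIn ρ W) (T : ℝ) : Pair U W T = Pair U W 0 := by
  set F : ℝ × Ed d → ℝ := fun p => DD (et d) U p * W p - U p * DD (et d) W p with hF
  have sF : ContDiff ℝ ∞ F :=
    ((DD_smooth hU _).mul hW).sub (hU.mul (DD_smooth hW _))
  have suF : SuppIn ρ F := fun p hp => by simp [hF, hs p hp, hs.DD _ p hp]
  set S := Metric.closedBall (0 : Ed d) (ρ + |T| + 1) with hS
  have hSc : IsCompact S := isCompact_closedBall _ _
  have key : ∀ G : ℝ × Ed d → ℝ, SuppIn ρ G → ∀ s ∈ Metric.ball (0:ℝ) (|T|+1), ∫ x in S, G (s, x) = ∫ x, G (s, x) := by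
    intro G hG s hs
    apply setIntegral_eq_integral_of_forall_compl_eq_zero
    intro x hx
    apply hG
    simp [hS] at hx hs ⊢
    linarith
  have hd := param_hasFDerivAt (P := ℝ) volume hSc sF
  have hdd := param_DD (P := ℝ) volume hSc sF (1:ℝ)
  have hFt : ∀ p, DD (et d) F p =
      ∑ i, DD (ex i) (fun p => DD (ex i) U p * W p - U p * DD (ex i) W p) p := by
    intro p
    have e : ∀ i : Fin d, DD (ex i) (fun p => DD (ex i) U p * W p - U p * DD (ex i) W p) p =
        DD (ex i) (DD (ex i) U) p * W p - U p * DD (ex i) (DD (ex i) W) p := by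
      intro i
      rw [DD_sub ((DD_smooth hU _).mul hW) (hU.mul (DD_smooth hW _)), DD_mul (DD_smooth hU _) hW,
        DD_mul hU (DD_smooth hW _)]
      ring
    simp only [e]
    rw [Finset.sum_sub_distrib, ← Finset.sum_mul, ← Finset.mul_sum, ← wU, ← wW, hF,
      DD_sub ((DD_smooth hU _).mul hW) (hU.mul (DD_smooth hW _)), DD_mul (DD_smooth hU _) hW,
        DD_mul hU (DD_smooth hW _)]
    ring
  have hconst := (Metric.isOpen_ball (x := (0:ℝ)) (ε := |T|+1)).is_const_of_deriv_eq_zero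
    (f := fun s => ∫ x in S, F (s, x)) (convex_ball _ _).isPreconnected
    (fun s _ => (hd s).differentiableAt.differentiableWithinAt) ?_ (x := T) (y := 0) (by simp) (by simp; positivity)
  · rw [key F suF T (by simp), key F suF 0 (by simp; positivity)] at hconst
    exact hconst
  · intro s hs'
    have : deriv (fun s => ∫ x in S, F (s, x)) s = DD (1:ℝ) (fun s => ∫ x in S, F (s, x)) s := by
      unfold DD; rw [fderiv_apply_one_eq_deriv]
    rw [this, hdd]
    simp only [Pi.zero_apply]
    have := key (DD (et d) F) (suF.DD _) s hs'
    unfold et at this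
    rw [this]
    simp only [← et.eq_def, hFt]
    have sG : ∀ i : Fin d, ContDiff ℝ ∞ (fun p => DD (ex i) U p * W p - U p * DD (ex i) W p) := fun i =>
      ((DD_smooth hU _).mul hW).sub (hU.mul (DD_smooth hW _))
    have suG : ∀ i : Fin d, SuppIn ρ (fun p => DD (ex i) U p * W p - U p * DD (ex i) W p) :=
      fun i p hp => by simp [hs p hp, hs.DD _ p hp]
    rw [integral_finsetSum]
    · refine Finset.sum_eq_zero fun i _ => ?_
      have := int_DD_zero (sl_smooth (sG i) s) ((suG i).bs s) (ei i)
      rw [sl_DD (sG i)] at this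
      exact this
    · intro i _
      exact (((suG i).DD _).bs s).integrable (sl_smooth (DD_smooth (sG i) _) s).continuous

end WaveAux


open MeasureTheory Filter Topology
open scoped ContDiff

namespace WaveAux

lemma slI {d : ℕ} {ρ : ℝ} {W F : ℝ × Ed d → ℝ} (hW : ContDiff ℝ ∞ W) (hs : SuppIn ρ W)
    (hF : ContDiff ℝ ∞ F) (s s' : ℝ) : Integrable (fun x => F (s', x) * W (s, x)) :=
  ((hs.bs s).mul_left _).integrable ((sl_smooth hF s').continuous.mul (sl_smooth hW s).continuous)

lemma energy {d : ℕ} {ρ : ℝ} {W : ℝ × Ed d → ℝ} (hW : ContDiff ℝ ∞ W) (wW : IsWave W)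
    (hs : SuppIn ρ W) (h0 : ∀ x, W (0, x) = 0) (s : ℝ) :
    (∫ x, DD (et d) W (s, x) ^ 2) + ∑ i, ∫ x, DD (ex i) W (s, x) ^ 2 = ∫ x, DD (et d) W (0, x) ^ 2 := by
  have h := pair_const (DD_smooth hW (et d)) hW (wW.DD hW _) wW hs s
  have sm := fun v => DD_smooth hW v
  unfold Pair at h
  simp only [h0] at h
  have e1 : ∫ x, (DD (et d) (DD (et d) W) (s, x) * W (s, x) - DD (et d) W (s, x) * DD (et d) W (s, x)) =
      - (∑ i, ∫ x, DD (ex i) W (s, x) ^ 2) - ∫ x, DD (et d) W (s, x) ^ 2 := by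
    rw [integral_sub (slI hW hs (DD_smooth (sm _) _) s s) (slI (sm _) (hs.DD _) (sm _) s s)]
    congr 1
    · have : ∀ x, DD (et d) (DD (et d) W) (s, x) * W (s, x) =
          ∑ i, DD (ex i) (DD (ex i) W) (s, x) * W (s, x) := by
        intro x; rw [wW, Finset.sum_mul]
      simp only [this]
      rw [integral_finsetSum _ (fun i _ => slI hW hs (DD_smooth (sm _) _) s s), ← Finset.sum_neg_distrib]
      refine Finset.sum_congr rfl fun i _ => ?_
      have := ibp (sl_smooth (sm (ex i)) s) (sl_smooth hW s) (hs.bs s) (ei i)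
      rw [sl_DD hW, sl_DD (sm _)] at this
      simp only [sq]
      linarith
    · simp only [sq]
  rw [e1] at h
  have e2 : ∫ x, (DD (et d) (DD (et d) W) (0, x) * 0 - DD (et d) W (0, x) * DD (et d) W (0, x)) =
      - ∫ x, DD (et d) W (0, x) ^ 2 := by
    rw [← integral_neg]; congr 1; funext x; ring
  rw [e2] at h
  linarith

/-- `1/(1+|x|^2)` -/
noncomputable def kap {d : ℕ} (x : Ed d) : ℝ := (1 + ‖x‖ ^ 2)⁻¹

lemma one_add_pos {d : ℕ} (x : Ed d) : 0 < 1 + ‖x‖ ^ 2 := by positivity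

lemma kap_smooth {d : ℕ} : ContDiff ℝ ∞ (kap (d := d)) := by
  unfold kap
  exact (contDiff_const.add (contDiff_norm_sq ℝ)).inv (fun x => (one_add_pos x).ne')

lemma co_smooth {d : ℕ} (i : Fin d) : ContDiff ℝ ∞ (fun x : Ed d => x i) :=
  (EuclideanSpace.proj i : Ed d →L[ℝ] ℝ).contDiff

lemma co_DD {d : ℕ} (i : Fin d) (x : Ed d) : DD (ei i) (fun x : Ed d => x i) x = 1 := by
  have : (fun x : Ed d => x i) = fun x => (EuclideanSpace.proj i : Ed d →L[ℝ] ℝ) x := by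
    funext x; simp
  unfold DD
  rw [this, ContinuousLinearMap.fderiv]
  simp [ei]

lemma jap_hasFDerivAt {d : ℕ} (x : Ed d) :
    HasFDerivAt (fun x : Ed d => 1 + ‖x‖ ^ 2) (2 • (innerSL ℝ x)) x := by
  simpa using (hasStrictFDerivAt_norm_sq x).hasFDerivAt.const_add 1

lemma inner_ei {d : ℕ} (x : Ed d) (i : Fin d) : innerSL ℝ x (ei i) = x i := by
  simp [ei, EuclideanSpace.inner_single_right]

lemma kap_DD {d : ℕ} (i : Fin d) (x : Ed d) : DD (ei i) kap x = - 2 * x i * kap x ^ 2 := by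
  have h := (hasDerivAt_inv (one_add_pos x).ne').comp_hasFDerivAt x (jap_hasFDerivAt x)
  have h2 := h.fderiv
  unfold DD kap
  simp only [Function.comp_def] at h2
  rw [h2]
  simp only [smul_apply, inner_ei, smul_eq_mul, nsmul_eq_mul]
  push_cast
  rw [inv_pow]; ring

lemma sum_co {d : ℕ} (x : Ed d) : ∑ i, (x i) ^ 2 = ‖x‖ ^ 2 := by
  rw [EuclideanSpace.norm_sq_eq]; simp

lemma hardy {d : ℕ} (hd : 3 ≤ d) {w : Ed d → ℝ} (hw : ContDiff ℝ ∞ w) (hs : BS w) :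
    ∫ x, kap x * w x ^ 2 ≤ 4 * ∑ i, ∫ x, DD (ei i) w x ^ 2 := by
  set k : Fin d → Ed d → ℝ := fun i x => (x i) * kap x * (w x * w x) with hk
  have sk : ∀ i, ContDiff ℝ ∞ (k i) := fun i => ((co_smooth i).mul kap_smooth).mul (hw.mul hw)
  have bk : ∀ i, BS (k i) := fun i => (hs.mul_left w).mul_left _
  have dk : ∀ i x, DD (ei i) (k i) x = (kap x - 2 * (x i) ^ 2 * kap x ^ 2) * w x ^ 2
      + 2 * (x i * kap x * w x) * DD (ei i) w x := by
    intro i x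
    rw [hk]
    simp only
    rw [DD_mul ((co_smooth i).mul kap_smooth) (hw.mul hw), DD_mul hw hw, DD_mul (co_smooth i) kap_smooth]
    simp only [co_DD, kap_DD]
    ring
  have i0 : Integrable (fun x => kap x * w x ^ 2) :=
    (hs.sq.mul_left kap).integrable (kap_smooth.continuous.mul (hw.continuous.pow 2))
  have i1 : ∀ i : Fin d, Integrable (fun x => DD (ei i) w x ^ 2) := fun i =>
    (hs.DD _).sq.integrable ((DD_smooth hw _).continuous.pow 2)
  have i2 : ∀ i : Fin d, Integrable (fun x => DD (ei i) (k i) x) := fun i =>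
    ((bk i).DD _).integrable (DD_smooth (sk i) _).continuous
  have hz : ∫ x, ∑ i, DD (ei i) (k i) x = 0 := by
    rw [integral_finsetSum _ (fun i _ => i2 i)]
    exact Finset.sum_eq_zero fun i _ => int_DD_zero (sk i) (bk i) _
  have hle : ∫ x, ((1/2) * (kap x * w x ^ 2) - 2 * ∑ i, DD (ei i) w x ^ 2) ≤ ∫ x, ∑ i, DD (ei i) (k i) x := by
    refine integral_mono ((i0.const_mul _).sub ((integrable_finsetSum _ (fun i _ => i1 i)).const_mul _))
      (integrable_finsetSum _ (fun i _ => i2 i)) ?_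
    intro x
    simp only
    have hp : ∀ i, (kap x - 2 * (x i) ^ 2 * kap x ^ 2) * w x ^ 2 - (1/2 * ((x i) ^ 2 * kap x ^ 2 * w x ^ 2) + 2 * DD (ei i) w x ^ 2)
       ≤ DD (ei i) (k i) x := by
      intro i
      rw [dk]
      nlinarith [sq_nonneg (x i * kap x * w x + 2 * DD (ei i) w x)]
    refine le_trans ?_ (Finset.sum_le_sum fun i _ => hp i)
    rw [Finset.sum_sub_distrib, Finset.sum_add_distrib, ← Finset.sum_mul, Finset.sum_sub_distrib, ← Finset.sum_mul,
      ← Finset.mul_sum, ← Finset.mul_sum, ← Finset.mul_sum, ← Finset.sum_mul, ← Finset.sum_mul, sum_co]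
    simp only [Finset.sum_const, Finset.card_univ, Fintype.card_fin, nsmul_eq_mul]
    have hkp : 0 < kap x := by unfold kap; exact inv_pos.mpr (one_add_pos x)
    have hk1 : ‖x‖ ^ 2 * kap x ≤ 1 := by
      unfold kap
      rw [← div_eq_mul_inv, div_le_one (one_add_pos x)]; linarith
    have hd' : (3:ℝ) ≤ d := by exact_mod_cast hd
    have hA : 0 ≤ kap x * w x ^ 2 := by positivity
    have hB : ‖x‖ ^ 2 * kap x ^ 2 * w x ^ 2 ≤ kap x * w x ^ 2 := by
      have := mul_le_mul_of_nonneg_right hk1 hA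
      linarith
    have hC : 3 * (kap x * w x ^ 2) ≤ d * (kap x * w x ^ 2) := mul_le_mul_of_nonneg_right hd' hA
    nlinarith
  rw [hz, integral_sub (i0.const_mul _) ((integrable_finsetSum _ (fun i _ => i1 i)).const_mul _),
    integral_const_mul, integral_const_mul, integral_finsetSum _ (fun i _ => i1 i)] at hle
  linarith

lemma cs {d : ℕ} {F w Q : Ed d → ℝ} {c : ℝ} (hc : 0 ≤ c) (hw : Integrable (fun x => w x ^ 2)) (hwc : Continuous w)
    (hQ : Integrable (fun x => Q x ^ 2)) (hQc : Continuous Q)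
    (hb : ∀ x, |F x * w x| ≤ c * (|Q x| * |w x|)) :
    |∫ x, F x * w x| ≤ c * (√(∫ x, Q x ^ 2) * √(∫ x, w x ^ 2)) := by
  have mQ : MemLp (fun x => |Q x|) 2 := by
    have : MemLp Q 2 := (memLp_two_iff_integrable_sq hQc.aestronglyMeasurable).mpr hQ
    exact this.abs
  have mw : MemLp (fun x => |w x|) 2 := by
    have : MemLp w 2 := (memLp_two_iff_integrable_sq hwc.aestronglyMeasurable).mpr hw
    exact this.abs
  have hintg : Integrable (fun x => |Q x| * |w x|) := mQ.integrable_mul mw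
  have h1 : ∫ x, |Q x| * |w x| ≤ √(∫ x, Q x ^ 2) * √(∫ x, w x ^ 2) := by
    have := integral_mul_le_Lp_mul_Lq_of_nonneg (μ := (volume : Measure (Ed d))) (p := 2) (q := 2)
      Real.HolderConjugate.two_two (f := fun x => |Q x|) (g := fun x => |w x|)
      (Eventually.of_forall fun x => abs_nonneg _) (Eventually.of_forall fun x => abs_nonneg _)
      (by simpa using mQ) (by simpa using mw)
    simpa [Real.sqrt_eq_rpow] using this
  calc |∫ x, F x * w x| ≤ ∫ x, |F x * w x| := abs_integral_le_integral_abs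
    _ ≤ ∫ x, c * (|Q x| * |w x|) :=
        integral_mono_of_nonneg (Eventually.of_forall fun x => abs_nonneg _) (hintg.const_mul c)
          (Eventually.of_forall hb)
    _ = c * ∫ x, |Q x| * |w x| := integral_const_mul _ _
    _ ≤ _ := mul_le_mul_of_nonneg_left h1 hc

lemma duality {d : ℕ} {ρ : ℝ} {U W : ℝ × Ed d → ℝ} (hU : ContDiff ℝ ∞ U) (wU : IsWave U)
    (hW : ContDiff ℝ ∞ W) (wW : IsWave W)
    (hs : SuppIn ρ W) (h0 : ∀ x, W (0, x) = 0) (T : ℝ) :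
    ∫ x, U (T, x) * DD (et d) W (0, x) =
      (∫ x, U (0, x) * DD (et d) W (-T, x)) - ∫ x, DD (et d) U (0, x) * W (-T, x) := by
  have h := pair_const (sh_smooth hU T) hW (sh_wave wU T) wW hs (-T)
  unfold Pair at h
  simp only [sh_DD, sh, h0, Prod.mk_add_mk, add_zero, zero_add, neg_add_cancel, mul_zero, zero_sub] at h
  rw [integral_neg, integral_sub (slI hW hs (DD_smooth hU _) (-T) 0)
    (slI (DD_smooth hW _) (hs.DD _) hU (-T) 0)] at h
  linarith

end WaveAux


open MeasureTheory Filter Topology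
open scoped ContDiff

namespace WaveAux

lemma energy_t {d : ℕ} {ρ : ℝ} {W : ℝ × Ed d → ℝ} (hW : ContDiff ℝ ∞ W) (wW : IsWave W)
    (hs : SuppIn ρ W) (h0 : ∀ x, W (0, x) = 0) (s : ℝ) :
    √(∫ x, DD (et d) W (s, x) ^ 2) ≤ √(∫ x, DD (et d) W (0, x) ^ 2) := by
  apply Real.sqrt_le_sqrt
  rw [← energy hW wW hs h0 s]
  have : 0 ≤ ∑ i, ∫ x, DD (ex i) W (s, x) ^ 2 :=
    Finset.sum_nonneg fun i _ => integral_nonneg fun x => sq_nonneg _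
  linarith

lemma energy_x {d : ℕ} {ρ : ℝ} {W : ℝ × Ed d → ℝ} (hW : ContDiff ℝ ∞ W) (wW : IsWave W)
    (hs : SuppIn ρ W) (h0 : ∀ x, W (0, x) = 0) (s : ℝ) (i : Fin d) :
    √(∫ x, DD (ex i) W (s, x) ^ 2) ≤ √(∫ x, DD (et d) W (0, x) ^ 2) := by
  apply Real.sqrt_le_sqrt
  rw [← energy hW wW hs h0 s]
  have h1 := Finset.single_le_sum (f := fun i => ∫ x, DD (ex i) W (s, x) ^ 2) (s := Finset.univ)
    (fun i _ => integral_nonneg fun x => sq_nonneg _) (Finset.mem_univ i)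
  have : 0 ≤ ∫ x, DD (et d) W (s, x) ^ 2 := integral_nonneg fun x => sq_nonneg _
  exact h1.trans (by linarith)

lemma kap_pos {d : ℕ} (x : Ed d) : 0 < kap x := inv_pos.mpr (one_add_pos x)

lemma energy_h {d : ℕ} (hd : 3 ≤ d) {ρ : ℝ} {W : ℝ × Ed d → ℝ} (hW : ContDiff ℝ ∞ W) (wW : IsWave W)
    (hs : SuppIn ρ W) (h0 : ∀ x, W (0, x) = 0) (s : ℝ) :
    √(∫ x, (√(kap x) * W (s, x)) ^ 2) ≤ 2 * √(∫ x, DD (et d) W (0, x) ^ 2) := by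
  have h2 : (2:ℝ) = √4 := by
    rw [show (4:ℝ) = 2 ^ 2 by norm_num, Real.sqrt_sq (by norm_num)]
  rw [h2, ← Real.sqrt_mul (by norm_num)]
  apply Real.sqrt_le_sqrt
  have h := hardy hd (sl_smooth hW s) (hs.bs s)
  have e : ∀ x : Ed d, (√(kap x) * W (s, x)) ^ 2 = kap x * W (s, x) ^ 2 := by
    intro x; rw [mul_pow, Real.sq_sqrt (kap_pos x).le]
  simp only [e]
  simp only [sl_DD hW] at h
  rw [← energy hW wW hs h0 s]
  have : 0 ≤ ∫ x, DD (et d) W (s, x) ^ 2 := integral_nonneg fun x => sq_nonneg _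
  linarith

/-- data bounds -/
structure Dat {d : ℕ} (U : ℝ × Ed d → ℝ) (Q : Ed d → ℝ) (c c' : ℝ) (a : ℝ) : Prop where
  hc : 0 ≤ c
  hc' : 0 ≤ c'
  hf : ∀ y, a ≤ ‖y‖ → |U (0, y)| ≤ c * |Q y|
  hfj : ∀ y, a ≤ ‖y‖ → ∀ j, |DD (ex j) U (0, y)| ≤ c * |Q y|
  hg : ∀ y, a ≤ ‖y‖ → |DD (et d) U (0, y)| ≤ c * |Q y|
  hg' : ∀ y, a ≤ ‖y‖ → |DD (et d) U (0, y)| ≤ c' * |Q y| * √(kap y)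

section core
variable {d : ℕ} {ρ : ℝ} {U W : ℝ × Ed d → ℝ} {Q : Ed d → ℝ} {c c' a T : ℝ}

lemma bnd {F w : Ed d → ℝ} (hF : ∀ y, a ≤ ‖y‖ → |F y| ≤ c * |Q y|) (hw : ∀ y, ‖y‖ < a → w y = 0) (x : Ed d) :
    |F x * w x| ≤ c * (|Q x| * |w x|) := by
  rcases lt_or_ge ‖x‖ a with h | h
  · simp [hw x h]
  · rw [abs_mul, ← mul_assoc]
    exact mul_le_mul_of_nonneg_right (hF x h) (abs_nonneg _)

lemma cs_W (hW : ContDiff ℝ ∞ W) (hs : SuppIn ρ W) (hv : ∀ p, ‖p.2‖ + ρ < |p.1| → W p = 0)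
    (ha : ∀ y : Ed d, ‖y‖ < a → ‖y‖ + ρ < |T|)
    (hQ : Integrable (fun x => Q x ^ 2)) (hQc : Continuous Q) {F : Ed d → ℝ} (hc : 0 ≤ c)
    (hF : ∀ y, a ≤ ‖y‖ → |F y| ≤ c * |Q y|) (v : ℝ × Ed d) {H : ℝ}
    (hH : √(∫ x, DD v W (-T, x) ^ 2) ≤ H) :
    |∫ x, F x * DD v W (-T, x)| ≤ c * √(∫ x, Q x ^ 2) * H := by
  have sW := sl_smooth (DD_smooth hW v) (-T)
  refine (cs hc (((hs.DD v).bs (-T)).sq.integrable (sW.continuous.pow 2)) sW.continuous hQ hQc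
    (bnd hF ?_)).trans ?_
  · intro y hy
    exact DD_zero_on (O := {p : ℝ × Ed d | ‖p.2‖ + ρ < |p.1|}) (isOpen_lt (by fun_prop) (by fun_prop)) hv v
      (-T, y) (by simpa using ha y hy)
  · rw [mul_assoc]
    exact mul_le_mul_of_nonneg_left (mul_le_mul_of_nonneg_left hH (Real.sqrt_nonneg _)) hc

lemma cs_W0 (hd : 3 ≤ d) (hW : ContDiff ℝ ∞ W) (wW : IsWave W) (hs : SuppIn ρ W) (h0 : ∀ x, W (0, x) = 0)
    (hv : ∀ p, ‖p.2‖ + ρ < |p.1| → W p = 0)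
    (ha : ∀ y : Ed d, ‖y‖ < a → ‖y‖ + ρ < |T|)
    (hQ : Integrable (fun x => Q x ^ 2)) (hQc : Continuous Q) {F : Ed d → ℝ} (hc : 0 ≤ c)
    (hF : ∀ y, a ≤ ‖y‖ → |F y| ≤ c * |Q y| * √(kap y)) :
    |∫ x, F x * W (-T, x)| ≤ c * √(∫ x, Q x ^ 2) * (2 * √(∫ x, DD (et d) W (0, x) ^ 2)) := by
  have sW := sl_smooth hW (-T)
  have ck : Continuous (fun x : Ed d => √(kap x)) := kap_smooth.continuous.sqrt
  have kp : ∀ x : Ed d, 0 < √(kap x) := fun x => Real.sqrt_pos.mpr (kap_pos x)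
  have e : ∀ x, F x * W (-T, x) = (F x * (√(kap x))⁻¹) * (√(kap x) * W (-T, x)) := by
    intro x; have := (kp x).ne'; field_simp
  simp only [e]
  refine (cs hc (((hs.bs (-T)).mul_left _).sq.integrable ((ck.mul sW.continuous).pow 2)) (ck.mul sW.continuous) hQ hQc
    (bnd (a := a) ?_ ?_)).trans ?_
  · intro y hy
    rw [abs_mul, abs_inv, abs_of_pos (kp y), ← div_eq_mul_inv, div_le_iff₀ (kp y)]
    exact hF y hy
  · intro y hy
    rw [hv (-T, y) (by simpa using ha y hy), mul_zero]
  · rw [mul_assoc]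
    exact mul_le_mul_of_nonneg_left (mul_le_mul_of_nonneg_left (energy_h hd hW wW hs h0 _) (Real.sqrt_nonneg _)) hc

lemma core (hd : 3 ≤ d) (hU : ContDiff ℝ ∞ U) (wU : IsWave U) (hW : ContDiff ℝ ∞ W) (wW : IsWave W)
    (hs : SuppIn ρ W) (h0 : ∀ x, W (0, x) = 0) (hv : ∀ p, ‖p.2‖ + ρ < |p.1| → W p = 0)
    (ha : ∀ y : Ed d, ‖y‖ < a → ‖y‖ + ρ < |T|)
    (hQ : Integrable (fun x => Q x ^ 2)) (hQc : Continuous Q) (D : Dat U Q c c' a) :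
    (|∫ x, U (T, x) * DD (et d) W (0, x)| ≤
      (c + 2 * c') * √(∫ x, Q x ^ 2) * √(∫ x, DD (et d) W (0, x) ^ 2)) ∧
    (|∫ x, DD (et d) U (T, x) * DD (et d) W (0, x)| ≤
      (1 + d) * c * √(∫ x, Q x ^ 2) * √(∫ x, DD (et d) W (0, x) ^ 2)) ∧
    (∀ j, |∫ x, DD (ex j) U (T, x) * DD (et d) W (0, x)| ≤
      2 * c * √(∫ x, Q x ^ 2) * √(∫ x, DD (et d) W (0, x) ^ 2)) := by
  have sU := fun v => DD_smooth hU v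
  have CT : ∀ {F : Ed d → ℝ}, (∀ y, a ≤ ‖y‖ → |F y| ≤ c * |Q y|) → _ := fun {F} hF =>
    cs_W hW hs hv ha hQ hQc D.hc hF (et d) (energy_t hW wW hs h0 (-T))
  have CX : ∀ {F : Ed d → ℝ}, (∀ y, a ≤ ‖y‖ → |F y| ≤ c * |Q y|) → ∀ i, _ := fun {F} hF i =>
    cs_W hW hs hv ha hQ hQc D.hc hF (ex i) (energy_x hW wW hs h0 (-T) i)
  refine ⟨?_, ?_, ?_⟩
  · rw [duality hU wU hW wW hs h0]
    refine (abs_sub _ _).trans ?_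
    have h1 := CT D.hf
    have h2 := cs_W0 hd hW wW hs h0 hv ha hQ hQc D.hc' D.hg'
    linarith
  · rw [duality (sU _) (wU.DD hU _) hW wW hs h0]
    have e : ∫ x, DD (et d) (DD (et d) U) (0, x) * W (-T, x) =
        - ∑ i, ∫ x, DD (ex i) U (0, x) * DD (ex i) W (-T, x) := by
      simp only [wU _, Finset.sum_mul]
      rw [integral_finsetSum _ (fun i _ => slI hW hs (DD_smooth (sU _) _) (-T) 0), ← Finset.sum_neg_distrib]
      refine Finset.sum_congr rfl fun i _ => ?_
      have := ibp (sl_smooth (sU (ex i)) 0) (sl_smooth hW (-T)) (hs.bs _) (ei i)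
      rw [sl_DD hW, sl_DD (sU _)] at this
      linarith
    rw [e, sub_neg_eq_add]
    refine (abs_add_le _ _).trans ?_
    have h1 := CT D.hg
    have h2 : |∑ i, ∫ x, DD (ex i) U (0, x) * DD (ex i) W (-T, x)| ≤
        ∑ i : Fin d, c * √(∫ x, Q x ^ 2) * √(∫ x, DD (et d) W (0, x) ^ 2) :=
      (Finset.abs_sum_le_sum_abs _ _).trans (Finset.sum_le_sum fun i _ => CX (fun y hy => D.hfj y hy i) i)
    simp only [Finset.sum_const, Finset.card_univ, Fintype.card_fin, nsmul_eq_mul] at h2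
    linarith
  · intro j
    rw [duality (sU _) (wU.DD hU _) hW wW hs h0]
    have e : ∫ x, DD (et d) (DD (ex j) U) (0, x) * W (-T, x) =
        - ∫ x, DD (et d) U (0, x) * DD (ex j) W (-T, x) := by
      have := ibp (sl_smooth (sU (et d)) 0) (sl_smooth hW (-T)) (hs.bs _) (ei j)
      rw [sl_DD hW, sl_DD (sU _), DD_comm hU] at this
      linarith
    rw [e, sub_neg_eq_add]
    refine (abs_add_le _ _).trans ?_
    have h1 := CT (fun y hy => D.hfj y hy j)
    have h2 := CX D.hg j
    linarith
end core

end WaveAux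


open MeasureTheory Filter Topology
open scoped ContDiff

namespace WaveAux

/-- admissible test functions -/
def Test {d : ℕ} (T a : ℝ) (g : Ed d → ℝ) : Prop :=
  ∃ (ρ : ℝ) (W : ℝ × Ed d → ℝ), ContDiff ℝ ∞ W ∧ IsWave W ∧ SuppIn ρ W ∧ (∀ x, W (0, x) = 0) ∧
    (∀ p, ‖p.2‖ + ρ < |p.1| → W p = 0) ∧ (∀ y : Ed d, ‖y‖ < a → ‖y‖ + ρ < |T|) ∧
    g = fun x => DD (et d) W (0, x)

lemma exists_test {d : ℕ} (hd : 3 ≤ d) (hodd : Odd d) {ρ T a : ℝ} (ha : a ≤ 0 ∨ a + ρ < |T|)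
    {h : Ed d → ℝ} (hh : ContDiff ℝ ∞ h) (hs : ∀ x, ρ < ‖x‖ → h x = 0) :
    ∃ δ₀ > 0, ∀ δ, 0 < δ → δ ≤ δ₀ → ∃ g : Ed d → ℝ, Test T a g ∧ Continuous g ∧ (∀ x, |g x - h x| ≤ δ) ∧
      ∀ x, ρ + δ < ‖x‖ → g x = 0 := by
  have hδ : ∃ δ₀ > 0, δ₀ ≤ 1 ∧ (a ≤ 0 ∨ a + ρ + δ₀ ≤ |T|) := by
    rcases ha with h | h
    · exact ⟨1, one_pos, le_rfl, Or.inl h⟩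
    · exact ⟨min 1 (|T| - (a + ρ)), lt_min one_pos (by linarith), min_le_left _ _,
        Or.inr (by linarith [min_le_right 1 (|T| - (a + ρ))])⟩
  obtain ⟨δ₀, h0, _, h2⟩ := hδ
  refine ⟨δ₀, h0, fun δ hδ hle => ?_⟩
  obtain ⟨W, hW, wW, W0, hap, s1, s2⟩ := exists_wave hd hodd hh hs hδ
  refine ⟨fun x => DD (et d) W (0, x), ⟨ρ + δ, W, hW, wW, s1, W0, ?_, ?_, rfl⟩,
    (sl_smooth (DD_smooth hW _) 0).continuous, hap, ?_⟩
  · intro p hp; exact s2 p (by linarith)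
  · intro y hy
    have := norm_nonneg y
    rcases h2 with h | h <;> linarith
  · intro x hx
    exact SuppIn.DD (ρ := ρ + δ) (W := W) s1 (et d) (0, x) (by simpa using hx)

lemma test_limit {d : ℕ} (hd : 3 ≤ d) (hodd : Odd d) {ρ T a M : ℝ} (ha : a ≤ 0 ∨ a + ρ < |T|)
    {h F : Ed d → ℝ} (hh : ContDiff ℝ ∞ h) (hs : ∀ x, ρ < ‖x‖ → h x = 0) (hF : Continuous F)
    (hM : ∀ g, Test T a g → |∫ x, F x * g x| ≤ M * √(∫ x, g x ^ 2)) :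
    |∫ x, F x * h x| ≤ M * √(∫ x, h x ^ 2) := by
  obtain ⟨δ₀, h0, H⟩ := exists_test hd hodd ha hh hs
  set δ : ℕ → ℝ := fun n => min δ₀ (1 / ((n:ℝ) + 1)) with hδ
  have δpos : ∀ n, 0 < δ n := fun n => lt_min h0 (by positivity)
  have δle : ∀ n, δ n ≤ 1 := fun n => (min_le_right _ _).trans (by
    rw [div_le_one (by positivity)]; linarith [Nat.cast_nonneg (α := ℝ) n])
  have δt : Tendsto δ atTop (𝓝 0) :=
    squeeze_zero (fun n => (δpos n).le) (fun n => min_le_right _ _) tendsto_one_div_add_atTop_nhds_zero_nat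
  choose g gT gc ga gs using fun n => H (δ n) (δpos n) (min_le_left _ _)
  have gt : ∀ x, Tendsto (fun n => g n x) atTop (𝓝 (h x)) := by
    intro x
    rw [tendsto_iff_norm_sub_tendsto_zero]
    exact squeeze_zero (fun n => norm_nonneg _) (fun n => ga n x) δt
  set B := Metric.closedBall (0 : Ed d) (ρ + 1)
  have gz : ∀ n x, x ∉ B → g n x = 0 := by
    intro n x hx
    apply gs n x
    have : ρ + 1 < ‖x‖ := by simpa [B] using hx
    linarith [δle n]
  have hz : ∀ x, x ∉ B → h x = 0 := by
    intro x hx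
    apply hs
    have : ρ + 1 < ‖x‖ := by simpa [B] using hx
    linarith
  have gb : ∀ n x, |g n x| ≤ |h x| + 1 := by
    intro n x
    have h1 := ga n x
    have h2 := abs_sub_abs_le_abs_sub (g n x) (h x)
    linarith [δle n]
  have dom : ∀ k : Ed d → ℝ, Continuous k → Integrable (B.indicator k) := fun k hk =>
    (integrable_indicator_iff Metric.isClosed_closedBall.measurableSet).mpr
      (hk.continuousOn.integrableOn_compact (isCompact_closedBall _ _))
  have l1 : Tendsto (fun n => ∫ x, F x * g n x) atTop (𝓝 (∫ x, F x * h x)) := by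
    refine tendsto_integral_of_dominated_convergence (B.indicator fun x => |F x| * (|h x| + 1))
      (fun n => (hF.mul (gc n)).aestronglyMeasurable)
      (dom _ (hF.abs.mul (hh.continuous.abs.add continuous_const))) ?_
      (Eventually.of_forall fun x => (gt x).const_mul _)
    intro n
    refine Eventually.of_forall fun x => ?_
    by_cases hx : x ∈ B
    · rw [Set.indicator_of_mem hx, Real.norm_eq_abs, abs_mul]
      exact mul_le_mul_of_nonneg_left (gb n x) (abs_nonneg _)
    · rw [Set.indicator_of_notMem hx, gz n x hx]; simp
  have l2 : Tendsto (fun n => ∫ x, g n x ^ 2) atTop (𝓝 (∫ x, h x ^ 2)) := by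
    refine tendsto_integral_of_dominated_convergence (B.indicator fun x => (|h x| + 1) ^ 2)
      (fun n => ((gc n).pow 2).aestronglyMeasurable)
      (dom _ ((hh.continuous.abs.add continuous_const).pow 2)) ?_
      (Eventually.of_forall fun x => (gt x).pow 2)
    intro n
    refine Eventually.of_forall fun x => ?_
    by_cases hx : x ∈ B
    · rw [Set.indicator_of_mem hx, Real.norm_eq_abs, abs_pow]
      exact pow_le_pow_left₀ (abs_nonneg _) (gb n x) 2
    · rw [Set.indicator_of_notMem hx, gz n x hx]; simp
  exact le_of_tendsto_of_tendsto' l1.abs ((Real.continuous_sqrt.tendsto _).comp l2 |>.const_mul M)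
    (fun n => hM _ (gT n))

lemma loc_bound {d : ℕ} (hd : 3 ≤ d) (hodd : Odd d) {r T a M : ℝ} (hr : 0 < r) (hM0 : 0 ≤ M)
    (ha : a ≤ 0 ∨ a + r < |T|) {F : Ed d → ℝ} (hF : ContDiff ℝ ∞ F)
    (hM : ∀ g, Test T a g → |∫ x, F x * g x| ≤ M * √(∫ x, g x ^ 2)) :
    ∫ x in Metric.closedBall 0 r, F x ^ 2 ≤ M ^ 2 := by
  obtain ⟨ρ, hρ, ha'⟩ : ∃ ρ, r < ρ ∧ (a ≤ 0 ∨ a + ρ < |T|) := by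
    rcases ha with h | h
    · exact ⟨r + 1, by linarith, Or.inl h⟩
    · exact ⟨r + (|T| - (a + r)) / 2, by linarith, Or.inr (by linarith)⟩
  obtain ⟨χ, χs, χ0, χ1, χin, χout⟩ : ∃ χ : Ed d → ℝ, ContDiff ℝ ∞ χ ∧ (∀ x, 0 ≤ χ x) ∧ (∀ x, χ x ≤ 1) ∧
      (∀ x ∈ Metric.closedBall 0 r, χ x = 1) ∧ (∀ x, ρ < ‖x‖ → χ x = 0) := by
    let b : ContDiffBump (0 : Ed d) := ⟨r, ρ, hr, hρ⟩
    refine ⟨b, b.contDiff, fun x => b.nonneg, fun x => b.le_one, fun x hx => b.one_of_mem_closedBall hx,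
      fun x hx => b.zero_of_le_dist ?_⟩
    simpa [b] using hx.le
  have bχ : BS χ := ⟨ρ, χout⟩
  have h := test_limit hd hodd ha' (h := fun x => χ x * F x) (χs.mul hF)
    (fun x hx => by simp [χout x hx]) hF.continuous hM
  have i1 : Integrable (fun x => χ x * F x ^ 2) :=
    (bχ.mul_right _).integrable (χs.continuous.mul (hF.continuous.pow 2))
  have i2 : Integrable (fun x => (χ x * F x) ^ 2) :=
    (bχ.mul_right _).sq.integrable ((χs.continuous.mul hF.continuous).pow 2)
  set I := ∫ x, χ x * F x ^ 2 with hI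
  have I0 : 0 ≤ I := integral_nonneg fun x => mul_nonneg (χ0 x) (sq_nonneg _)
  have e1 : ∫ x, F x * (χ x * F x) = I := by
    rw [hI]; congr 1; funext x; ring
  have e2 : ∫ x, (χ x * F x) ^ 2 ≤ I := by
    refine integral_mono i2 i1 fun x => ?_
    simp only
    have := χ0 x; have := χ1 x
    have h3 : χ x * χ x ≤ χ x := by nlinarith
    calc (χ x * F x) ^ 2 = χ x * χ x * F x ^ 2 := by ring
      _ ≤ _ := mul_le_mul_of_nonneg_right h3 (sq_nonneg _)
  rw [e1, abs_of_nonneg I0] at h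
  have h4 : I ≤ M * √I := h.trans (mul_le_mul_of_nonneg_left (Real.sqrt_le_sqrt e2) hM0)
  have h5 : I ≤ M ^ 2 := by
    have s1 := Real.sq_sqrt I0
    have s0 := Real.sqrt_nonneg I
    rcases s0.eq_or_lt with h6 | h6
    · rw [← h6] at s1; nlinarith
    · have : √I ≤ M := by
        by_contra hcon
        push Not at hcon
        nlinarith
      nlinarith
  refine le_trans ?_ h5
  rw [hI, ← integral_indicator Metric.isClosed_closedBall.measurableSet]
  refine integral_mono_of_nonneg (Eventually.of_forall fun x => ?_) i1 (Eventually.of_forall fun x => ?_)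
  · exact Set.indicator_nonneg (fun x _ => sq_nonneg _) x
  · by_cases hx : x ∈ Metric.closedBall (0 : Ed d) r
    · simp only [Set.indicator_of_mem hx, χin x hx]; simp
    · simp only [Set.indicator_of_notMem hx]; exact mul_nonneg (χ0 x) (sq_nonneg _)

/-- convert to eLpNorm -/
lemma eLp_of_int {d : ℕ} {F : Ed d → ℝ} (hF : Continuous F) {r M : ℝ} (hM : 0 ≤ M)
    (h : ∫ x in Metric.closedBall 0 r, F x ^ 2 ≤ M ^ 2) :
    eLpNorm F 2 (volume.restrict (Metric.closedBall 0 r)) ≤ ENNReal.ofReal M := by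
  have hi : Integrable (fun x => F x ^ 2) (volume.restrict (Metric.closedBall 0 r)) :=
    (hF.pow 2).continuousOn.integrableOn_compact (isCompact_closedBall _ _)
  have hm : MemLp F 2 (volume.restrict (Metric.closedBall 0 r)) :=
    (memLp_two_iff_integrable_sq hF.aestronglyMeasurable).mpr hi
  rw [hm.eLpNorm_eq_integral_rpow_norm (by norm_num) (by norm_num)]
  apply ENNReal.ofReal_le_ofReal
  simp only [ENNReal.toReal_ofNat, Real.rpow_ofNat, Real.norm_eq_abs, sq_abs]
  rw [← one_div, ← Real.sqrt_eq_rpow]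
  exact Real.sqrt_le_iff.mpr ⟨hM, h⟩

lemma eLp_global {d : ℕ} {F : Ed d → ℝ} {M : ENNReal}
    (h : ∀ r > 0, eLpNorm F 2 (volume.restrict (Metric.closedBall 0 r)) ≤ M) :
    eLpNorm F 2 volume ≤ M := by
  have hu : (⋃ n : ℕ, Metric.closedBall (0 : Ed d) (n + 1)) = Set.univ := by
    refine Set.eq_univ_of_forall fun x => ?_
    obtain ⟨n, hn⟩ := exists_nat_ge ‖x‖
    exact Set.mem_iUnion.mpr ⟨n, by simp; linarith⟩
  rw [eLpNorm_eq_lintegral_rpow_enorm_toReal (by norm_num) (by norm_num)]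
  have key : ∫⁻ x, ‖F x‖ₑ ^ (2:ENNReal).toReal ≤ M ^ (2:ℝ) := by
    rw [← setLIntegral_univ, ← hu, setLIntegral_iUnion_of_directed]
    · refine iSup_le fun n => ?_
      have := h (n + 1) (by positivity)
      rw [eLpNorm_eq_lintegral_rpow_enorm_toReal (by norm_num) (by norm_num)] at this
      have h2 := ENNReal.rpow_le_rpow this (z := 2) (by norm_num)
      rwa [← ENNReal.rpow_mul, ENNReal.toReal_ofNat, one_div, inv_mul_cancel₀ (by norm_num), ENNReal.rpow_one] at h2
    · refine Monotone.directed_le fun m n hmn => ?_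
      exact Metric.closedBall_subset_closedBall (by gcongr)
  have h3 := ENNReal.rpow_le_rpow key (z := 1/2) (by norm_num)
  rw [← ENNReal.rpow_mul] at h3
  simpa using h3

end WaveAux


open MeasureTheory Filter Topology
open scoped ContDiff

namespace WaveAux

/-- the weight -/
noncomputable def om (α t : ℝ) : ℝ := (1 + t ^ 2) ^ (-α / 2)

lemma om_pos (α t : ℝ) : 0 < om α t := Real.rpow_pos_of_pos (by positivity) _

lemma om_zero (α : ℝ) : om α 0 = 1 := by simp [om]

lemma om_anti {α : ℝ} (hα : 0 ≤ α) {s t : ℝ} (hs : 0 ≤ s) (h : s ≤ t) : om α t ≤ om α s := by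
  unfold om
  exact Real.rpow_le_rpow_of_nonpos (by positivity) (by gcongr) (by linarith)

lemma om_le_one {α : ℝ} (hα : 0 ≤ α) (t : ℝ) : om α t ≤ 1 := by
  unfold om
  exact Real.rpow_le_one_of_one_le_of_nonpos (by nlinarith [sq_nonneg t]) (by linarith)

lemma om_scale {α : ℝ} (hα : 0 ≤ α) {m : ℝ} (hm : 1 ≤ m) (t : ℝ) : om α (t / m) ≤ m ^ α * om α t := by
  have e : m ^ α * om α t = ((1 + t ^ 2) / m ^ 2) ^ (-α / 2) := by
    have h2 : (m ^ 2) ^ (-α / 2) = (m ^ α)⁻¹ := by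
      rw [← Real.rpow_natCast, ← Real.rpow_mul (by positivity), ← Real.rpow_neg (by positivity)]
      congr 1; push_cast; ring
    unfold om
    rw [Real.div_rpow (by positivity) (by positivity), h2, div_inv_eq_mul, mul_comm]
  rw [e]
  unfold om
  refine Real.rpow_le_rpow_of_nonpos (by positivity) ?_ (by linarith)
  rw [div_pow, div_le_iff₀ (by positivity), add_mul, div_mul_cancel₀ _ (by positivity)]
  nlinarith

/-- weights with one power removed -/
lemma om_kap {d : ℕ} {α : ℝ} (hα : 1 ≤ α) {a : ℝ} (ha : 0 ≤ a) {y : Ed d} (h : a ≤ ‖y‖) :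
    om α ‖y‖ ≤ om α a * √(1 + a ^ 2) * √(kap y) := by
  have hs : ∀ t : ℝ, om α t * √(1 + t ^ 2) = om (α - 1) t := by
    intro t
    unfold om
    rw [Real.sqrt_eq_rpow, ← Real.rpow_add (by positivity)]
    congr 1; ring
  rw [hs]
  have e : √(kap y) = (√(1 + ‖y‖ ^ 2))⁻¹ := by unfold kap; rw [Real.sqrt_inv]
  have hp : 0 < √(1 + ‖y‖ ^ 2) := Real.sqrt_pos.mpr (one_add_pos y)
  rw [e, ← div_eq_mul_inv, le_div_iff₀ hp, hs]
  exact om_anti (by linarith) ha h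

lemma om_le_kap {d : ℕ} {α : ℝ} (hα : 1 ≤ α) (y : Ed d) : om α ‖y‖ ≤ √(kap y) := by
  simpa [om_zero] using om_kap hα le_rfl (norm_nonneg y)

/-- global data -/
structure GDat {d : ℕ} (α K : ℝ) (U : ℝ × Ed d → ℝ) (Q : Ed d → ℝ) : Prop where
  sU : ContDiff ℝ ∞ U
  wU : IsWave U
  Qc : Continuous Q
  Qi : Integrable (fun x => Q x ^ 2)
  K0 : 0 ≤ K
  hf : ∀ y, |U (0, y)| ≤ K * om α ‖y‖ * |Q y|
  hfj : ∀ y j, |DD (ex j) U (0, y)| ≤ K * om α ‖y‖ * |Q y|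
  hg : ∀ y, |DD (et d) U (0, y)| ≤ K * om α ‖y‖ * |Q y|

lemma GDat.dat {d : ℕ} {α K : ℝ} (hα : 1 ≤ α) {U : ℝ × Ed d → ℝ} {Q : Ed d → ℝ} (G : GDat α K U Q) {a : ℝ} (ha : 0 ≤ a) :
    Dat U Q (K * om α a) (K * (om α a * √(1 + a ^ 2))) a := by
  have K0 := G.K0
  have hm : ∀ y : Ed d, a ≤ ‖y‖ → K * om α ‖y‖ * |Q y| ≤ K * om α a * |Q y| := fun y hy =>
    mul_le_mul_of_nonneg_right (mul_le_mul_of_nonneg_left (om_anti (by linarith) ha hy) K0) (abs_nonneg _)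
  refine ⟨mul_nonneg K0 (om_pos _ _).le, mul_nonneg K0 (mul_nonneg (om_pos _ _).le (Real.sqrt_nonneg _)),
    fun y hy => (G.hf y).trans (hm y hy), fun y hy j => (G.hfj y j).trans (hm y hy),
    fun y hy => (G.hg y).trans (hm y hy), fun y hy => (G.hg y).trans ?_⟩
  have := mul_le_mul_of_nonneg_left (om_kap hα ha hy) (mul_nonneg K0 (abs_nonneg (Q y)))
  linarith

/-- `L^2` norm of Q -/
noncomputable def nQ {d : ℕ} (Q : Ed d → ℝ) : ℝ := √(∫ x, Q x ^ 2)

lemma nQ_nonneg {d : ℕ} (Q : Ed d → ℝ) : 0 ≤ nQ Q := Real.sqrt_nonneg _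

/-- shorthand for local L2 norm -/
noncomputable def eB {d : ℕ} (F : Ed d → ℝ) (r : ℝ) : ENNReal := eLpNorm F 2 (volume.restrict (Metric.closedBall 0 r))

lemma GDat.loc {d : ℕ} (hd : 3 ≤ d) (hodd : Odd d) {α K : ℝ} (hα : 1 ≤ α) {U : ℝ × Ed d → ℝ} {Q : Ed d → ℝ}
    (G : GDat α K U Q) {a r T : ℝ} (ha : 0 ≤ a) (hr : 0 < r) (har : a = 0 ∨ a + r < |T|) :
    eB (fun x => U (T, x)) r ≤ ENNReal.ofReal (3 * √(1 + a ^ 2) * (om α a * (K * nQ Q))) ∧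
    eB (fun x => DD (et d) U (T, x)) r ≤ ENNReal.ofReal ((1 + d) * (om α a * (K * nQ Q))) ∧
    ∀ j, eB (fun x => DD (ex j) U (T, x)) r ≤ ENNReal.ofReal (2 * (om α a * (K * nQ Q))) := by
  have har' : a ≤ 0 ∨ a + r < |T| := har.imp_left le_of_eq
  have D := G.dat hα ha
  have hS : 0 ≤ om α a * (K * nQ Q) := mul_nonneg (om_pos _ _).le (mul_nonneg G.K0 (nQ_nonneg _))
  have h1 : 1 ≤ √(1 + a ^ 2) := Real.one_le_sqrt.mpr (by nlinarith)
  have fin : ∀ {M : ℝ} {F : Ed d → ℝ}, 0 ≤ M → ContDiff ℝ ∞ F →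
      (∀ g, Test T a g → |∫ x, F x * g x| ≤ M * √(∫ x, g x ^ 2)) → eB F r ≤ ENNReal.ofReal M := by
    intro M F hM hF h
    exact eLp_of_int hF.continuous hM (loc_bound hd hodd hr hM har' hF h)
  refine ⟨fin (mul_nonneg (by positivity) hS) (sl_smooth G.sU T) fun g hg => ?_,
    fin (mul_nonneg (by positivity) hS) (sl_smooth (DD_smooth G.sU _) T) fun g hg => ?_,
    fun j => fin (mul_nonneg (by positivity) hS) (sl_smooth (DD_smooth G.sU _) T) fun g hg => ?_⟩
  · obtain ⟨ρ, W, hW, wW, hs, h0, hv, hy, rfl⟩ := hg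
    refine (core hd G.sU G.wU hW wW hs h0 hv hy G.Qi G.Qc D).1.trans (mul_le_mul_of_nonneg_right ?_ (Real.sqrt_nonneg _))
    rw [← nQ.eq_def]
    nlinarith
  · obtain ⟨ρ, W, hW, wW, hs, h0, hv, hy, rfl⟩ := hg
    refine (core hd G.sU G.wU hW wW hs h0 hv hy G.Qi G.Qc D).2.1.trans (mul_le_mul_of_nonneg_right ?_ (Real.sqrt_nonneg _))
    rw [← nQ.eq_def]
    nlinarith
  · obtain ⟨ρ, W, hW, wW, hs, h0, hv, hy, rfl⟩ := hg
    refine ((core hd G.sU G.wU hW wW hs h0 hv hy G.Qi G.Qc D).2.2 j).trans (mul_le_mul_of_nonneg_right ?_ (Real.sqrt_nonneg _))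
    rw [← nQ.eq_def]
    nlinarith

lemma GDat.glob {d : ℕ} (hd : 3 ≤ d) (hodd : Odd d) {α K : ℝ} (hα : 1 ≤ α) {U : ℝ × Ed d → ℝ} {Q : Ed d → ℝ}
    (G : GDat α K U Q) (T : ℝ) :
    eLpNorm (fun x => U (T, x)) 2 volume ≤ ENNReal.ofReal (3 * (K * nQ Q)) ∧
    eLpNorm (fun x => DD (et d) U (T, x)) 2 volume ≤ ENNReal.ofReal ((1 + d) * (K * nQ Q)) ∧
    ∀ j, eLpNorm (fun x => DD (ex j) U (T, x)) 2 volume ≤ ENNReal.ofReal (2 * (K * nQ Q)) := by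
  have h := fun (r : ℝ) (hr : r > 0) => G.loc (T := T) hd hodd hα (a := 0) le_rfl hr (Or.inl rfl)
  simp only [om_zero, one_mul] at h
  refine ⟨eLp_global fun r hr => ?_, eLp_global fun r hr => (h r hr).2.1, fun j => eLp_global fun r hr => (h r hr).2.2 j⟩
  have := (h r hr).1
  rw [zero_pow (by norm_num), add_zero, Real.sqrt_one, mul_one] at this
  exact this

lemma tworeg {d : ℕ} {α : ℝ} (hα : 0 ≤ α) {F : Ed d → ℝ} (hF : Continuous F) {R A B : ℝ} (hR : 0 ≤ R)
    (hA0 : 0 ≤ A) (hB0 : 0 ≤ B)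
    (hA : eLpNorm F 2 volume ≤ ENNReal.ofReal A)
    (hB : eB (fun x => om α ‖x‖ * F x) R ≤ ENNReal.ofReal B) :
    eLpNorm (fun x => om α ‖x‖ * F x) 2 volume ≤ ENNReal.ofReal (B + om α R * A) := by
  have hc : Continuous (fun x : Ed d => om α ‖x‖ * F x) := by
    unfold om
    refine Continuous.mul (Continuous.rpow_const (by fun_prop) fun x => Or.inl (one_add_pos x).ne') hF
  set S := Metric.closedBall (0 : Ed d) R
  have hS : MeasurableSet S := Metric.isClosed_closedBall.measurableSet
  have e : (fun x => om α ‖x‖ * F x) = S.indicator (fun x => om α ‖x‖ * F x) + Sᶜ.indicator (fun x => om α ‖x‖ * F x) :=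
    (Set.indicator_self_add_compl _ _).symm
  rw [e, ENNReal.ofReal_add hB0 (mul_nonneg (om_pos _ _).le hA0)]
  refine (eLpNorm_add_le (hc.aestronglyMeasurable.indicator hS) (hc.aestronglyMeasurable.indicator hS.compl) (by norm_num)).trans ?_
  gcongr
  · rw [eLpNorm_indicator_eq_eLpNorm_restrict hS]; exact hB
  · refine (eLpNorm_le_mul_eLpNorm_of_ae_le_mul (c := om α R) (g := F) (Eventually.of_forall fun x => ?_) 2).trans ?_
    · by_cases hx : x ∈ S
      · rw [Set.indicator_of_notMem (by simpa using hx)]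
        simp only [norm_zero]; exact mul_nonneg (om_pos _ _).le (norm_nonneg _)
      · rw [Set.indicator_of_mem (by simpa using hx), norm_mul, Real.norm_of_nonneg (om_pos _ _).le]
        have : R < ‖x‖ := by simpa [S] using hx
        exact mul_le_mul_of_nonneg_right (om_anti hα hR this.le) (norm_nonneg _)
    · rw [ENNReal.ofReal_mul (om_pos _ _).le]
      gcongr

lemma eLp_bs {d : ℕ} {F : Ed d → ℝ} (hF : Continuous F) (hs : BS F) :
    eLpNorm F 2 volume = ENNReal.ofReal (√(∫ x, F x ^ 2)) := by
  have hm : MemLp F 2 := (memLp_two_iff_integrable_sq hF.aestronglyMeasurable).mpr (hs.sq.integrable (hF.pow 2))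
  rw [hm.eLpNorm_eq_integral_rpow_norm (by norm_num) (by norm_num)]
  congr 1
  simp only [ENNReal.toReal_ofNat, Real.rpow_ofNat, Real.norm_eq_abs, sq_abs]
  rw [← one_div, ← Real.sqrt_eq_rpow]

lemma hardyE {d : ℕ} (hd : 3 ≤ d) {w : Ed d → ℝ} (hw : ContDiff ℝ ∞ w) (hs : BS w) {m : ℝ} (hm : 0 ≤ m)
    (h : ∀ j, eLpNorm (DD (ei j) w) 2 volume ≤ ENNReal.ofReal m) :
    eLpNorm (fun x => √(kap x) * w x) 2 volume ≤ ENNReal.ofReal (2 * d * m) := by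
  have ck : Continuous (fun x : Ed d => √(kap x)) := kap_smooth.continuous.sqrt
  rw [eLp_bs (F := fun x => √(kap x) * w x) (ck.mul hw.continuous) (hs.mul_left _)]
  apply ENNReal.ofReal_le_ofReal
  rw [Real.sqrt_le_iff]
  refine ⟨by positivity, ?_⟩
  have e : ∀ x : Ed d, (√(kap x) * w x) ^ 2 = kap x * w x ^ 2 := by
    intro x; rw [mul_pow, Real.sq_sqrt (kap_pos x).le]
  simp only [e]
  refine (hardy hd hw hs).trans ?_
  have hj : ∀ j : Fin d, ∫ x, DD (ei j) w x ^ 2 ≤ m ^ 2 := by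
    intro j
    have := h j
    rw [eLp_bs (DD_smooth hw _).continuous (hs.DD _), ENNReal.ofReal_le_ofReal_iff hm, Real.sqrt_le_iff] at this
    exact this.2
  have := Finset.sum_le_sum (fun j (_ : j ∈ (Finset.univ : Finset (Fin d))) => hj j)
  simp only [Finset.sum_const, Finset.card_univ, Fintype.card_fin, nsmul_eq_mul] at this
  have hd' : (3:ℝ) ≤ d := by exact_mod_cast hd
  have h6 : (d:ℝ) * m ^ 2 ≤ d * (d * m ^ 2) := mul_le_mul_of_nonneg_left (by nlinarith [sq_nonneg m]) (by positivity)
  nlinarith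

end WaveAux


open MeasureTheory Filter Topology
open scoped ContDiff

namespace WaveAux

lemma exists_bump (d : ℕ) : ∃ (b : Ed d → ℝ) (L : ℝ), 0 ≤ L ∧ ContDiff ℝ ∞ b ∧ (∀ x, 0 ≤ b x) ∧ (∀ x, b x ≤ 1) ∧
    (∀ x, ‖x‖ ≤ 1/8 → b x = 1) ∧ (∀ x, 1/4 < ‖x‖ → b x = 0) ∧ ∀ j x, |DD (ei j) b x| ≤ L := by
  let b : ContDiffBump (0 : Ed d) := ⟨1/8, 1/4, by norm_num, by norm_num⟩
  have hb : ContDiff ℝ ∞ b := b.contDiff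
  obtain ⟨L, hL⟩ := (hb.continuous_fderiv (by simp)).bounded_above_of_compact_support (b.hasCompactSupport.fderiv ℝ)
  refine ⟨b, L, (norm_nonneg _).trans (hL 0), hb, fun x => b.nonneg, fun x => b.le_one, fun x hx => b.one_of_mem_closedBall ?_,
    fun x hx => b.zero_of_le_dist ?_, fun j x => ?_⟩
  · simpa [b] using hx
  · have := hx.le
    simpa [b] using this
  · unfold DD
    have h1 := (fderiv ℝ b x).le_opNorm (ei j)
    have h2 : ‖(ei j : Ed d)‖ = 1 := by simp [ei]
    rw [h2, mul_one, Real.norm_eq_abs] at h1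
    exact h1.trans (hL x)

lemma scale_DD {d : ℕ} {b : Ed d → ℝ} (hb : ContDiff ℝ ∞ b) (c : ℝ) (v x : Ed d) :
    DD v (fun x => b (c • x)) x = c * DD v b (c • x) := by
  have h := (sdiff hb (c • x)).hasFDerivAt.comp x ((hasFDerivAt_id x).const_smul c)
  have h2 := h.fderiv
  simp only [Function.comp_def] at h2
  unfold DD
  rw [h2]
  simp

lemma inner_bound {d : ℕ} (hd : 3 ≤ d) (hodd : Odd d) {α : ℝ} (hα : 1 ≤ α) :
    ∃ L : ℝ, 0 ≤ L ∧ ∀ (K : ℝ) (U : ℝ × Ed d → ℝ) (Q : Ed d → ℝ) (T : ℝ), GDat α K U Q → 1 ≤ |T| →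
      eB (fun x => om α ‖x‖ * U (T, x)) (|T| / 8) ≤
        ENNReal.ofReal (2 * d * ((2 + 6 * L) * (om α (|T| / 2) * (K * nQ Q)))) := by
  obtain ⟨b, L, hL, sb, b0, b1, bin, bout, bL⟩ := exists_bump d
  refine ⟨L, hL, fun K U Q T G hT => ?_⟩
  have Tp : 0 < |T| := by linarith
  set S := om α (|T| / 2) * (K * nQ Q) with hS
  have S0 : 0 ≤ S := mul_nonneg (om_pos _ _).le (mul_nonneg G.K0 (nQ_nonneg _))
  obtain ⟨e0, -, ej⟩ := G.loc (T := T) hd hodd hα (a := |T| / 2) (r := |T| / 4) (by positivity) (by positivity)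
    (Or.inr (by linarith))
  rw [← hS] at e0 ej
  set φ : Ed d → ℝ := fun x => b (|T|⁻¹ • x) with hφ
  have sφ : ContDiff ℝ ∞ φ := sb.comp (contDiff_const_smul _)
  have nrm : ∀ x : Ed d, ‖|T|⁻¹ • x‖ = ‖x‖ / |T| := by
    intro x; rw [norm_smul, norm_inv, Real.norm_eq_abs, abs_abs]; ring
  have φin : ∀ x, ‖x‖ ≤ |T| / 8 → φ x = 1 := by
    intro x hx
    apply bin; rw [nrm, div_le_iff₀ Tp]; linarith
  have φout : ∀ x, |T| / 4 < ‖x‖ → φ x = 0 := by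
    intro x hx
    apply bout; rw [nrm, lt_div_iff₀ Tp]; linarith
  set u : Ed d → ℝ := fun x => U (T, x) with hu
  have su : ContDiff ℝ ∞ u := sl_smooth G.sU T
  have uj : ∀ j, DD (ei j) u = fun x => DD (ex j) U (T, x) := fun j => sl_DD G.sU T j
  have sw : ContDiff ℝ ∞ (fun x => φ x * u x) := sφ.mul su
  have bw : BS (fun x => φ x * u x) := ⟨|T| / 4, fun x hx => by simp [φout x hx]⟩
  set m := (2 + 6 * L) * S with hm
  have m0 : 0 ≤ m := mul_nonneg (by positivity) S0
  have hj : ∀ j, eLpNorm (DD (ei j) (fun x => φ x * u x)) 2 volume ≤ ENNReal.ofReal m := by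
    intro j
    have hz : ∀ x, |T| / 4 < ‖x‖ → DD (ei j) (fun x => φ x * u x) x = 0 :=
      DD_zero_on (O := {x : Ed d | |T| / 4 < ‖x‖}) (isOpen_lt continuous_const continuous_norm)
        (fun x hx => by simp [φout x hx]) (ei j)
    have ei1 : DD (ei j) (fun x => φ x * u x) = (Metric.closedBall (0 : Ed d) (|T| / 4)).indicator
        (DD (ei j) (fun x => φ x * u x)) := by
      funext x
      by_cases hx : x ∈ Metric.closedBall (0 : Ed d) (|T| / 4)
      · rw [Set.indicator_of_mem hx]
      · rw [Set.indicator_of_notMem hx]; exact hz x (by simpa using hx)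
    rw [ei1, eLpNorm_indicator_eq_eLpNorm_restrict Metric.isClosed_closedBall.measurableSet]
    have ed : DD (ei j) (fun x => φ x * u x) = (fun x => φ x * DD (ei j) u x) + fun x => (DD (ei j) φ x) * u x := by
      rw [DD_mul sφ su]; funext x; simp only [Pi.add_apply]; ring
    rw [ed]
    refine (eLpNorm_add_le ((sφ.continuous.mul (DD_smooth su _).continuous).aestronglyMeasurable)
      (((DD_smooth sφ _).continuous.mul su.continuous).aestronglyMeasurable) (by norm_num)).trans ?_
    have t1 : eLpNorm (fun x => φ x * DD (ei j) u x) 2 (volume.restrict (Metric.closedBall 0 (|T| / 4))) ≤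
        ENNReal.ofReal (2 * S) := by
      refine (eLpNorm_mono (g := DD (ei j) u) fun x => ?_).trans ?_
      · rw [norm_mul, Real.norm_of_nonneg (b0 _)]
        exact mul_le_of_le_one_left (norm_nonneg _) (b1 _)
      · rw [uj]; exact ej j
    have t2 : eLpNorm (fun x => DD (ei j) φ x * u x) 2 (volume.restrict (Metric.closedBall 0 (|T| / 4))) ≤
        ENNReal.ofReal (6 * L * S) := by
      refine (eLpNorm_le_mul_eLpNorm_of_ae_le_mul (c := |T|⁻¹ * L) (g := u) (Eventually.of_forall fun x => ?_) 2).trans ?_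
      · rw [norm_mul]
        refine mul_le_mul_of_nonneg_right ?_ (norm_nonneg _)
        rw [hφ, scale_DD sb, norm_mul, norm_inv, Real.norm_eq_abs, abs_abs]
        exact mul_le_mul_of_nonneg_left (bL j _) (by positivity)
      · refine (mul_le_mul_right e0 _).trans ?_
        rw [← ENNReal.ofReal_mul (by positivity)]
        apply ENNReal.ofReal_le_ofReal
        have hsq : √(1 + (|T| / 2) ^ 2) ≤ 2 * |T| := by
          rw [Real.sqrt_le_iff]; constructor
          · positivity
          · nlinarith
        calc |T|⁻¹ * L * (3 * √(1 + (|T| / 2) ^ 2) * S) ≤ |T|⁻¹ * L * (3 * (2 * |T|) * S) := by gcongr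
          _ = 6 * L * S := by field_simp; ring
    calc _ ≤ ENNReal.ofReal (2 * S) + ENNReal.ofReal (6 * L * S) := add_le_add t1 t2
      _ = ENNReal.ofReal m := by
        rw [← ENNReal.ofReal_add (by positivity) (by positivity)]; congr 1; rw [hm]; ring
  refine le_trans ?_ (hardyE hd sw bw m0 hj)
  unfold eB
  rw [← eLpNorm_indicator_eq_eLpNorm_restrict Metric.isClosed_closedBall.measurableSet]
  refine eLpNorm_mono fun x => ?_
  by_cases hx : x ∈ Metric.closedBall (0 : Ed d) (|T| / 8)
  · rw [Set.indicator_of_mem hx, φin x (by simpa using hx), one_mul, norm_mul, norm_mul,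
      Real.norm_of_nonneg (om_pos _ _).le, Real.norm_of_nonneg (Real.sqrt_nonneg _)]
    exact mul_le_mul_of_nonneg_right (om_le_kap hα x) (norm_nonneg _)
  · rw [Set.indicator_of_notMem hx, norm_zero]; exact norm_nonneg _

lemma om_abs (α t : ℝ) : om α |t| = om α t := by unfold om; rw [sq_abs]

lemma om_half {α : ℝ} (hα : 1 ≤ α) {t m : ℝ} (hm : 1 ≤ m) (hm8 : m ≤ 8) : om α (|t| / m) ≤ 8 ^ α * om α t := by
  have h := om_scale (by linarith : 0 ≤ α) hm |t|
  rw [om_abs] at h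
  exact h.trans (mul_le_mul_of_nonneg_right (Real.rpow_le_rpow (by linarith) hm8 (by linarith)) (om_pos _ _).le)

lemma om_small {α : ℝ} (hα : 1 ≤ α) {t : ℝ} (ht : |t| < 1) : 1 ≤ 8 ^ α * om α t := by
  have h1 : om α 1 ≤ om α t := by
    rw [← om_abs α t]; exact om_anti (by linarith) (abs_nonneg _) ht.le
  have h2 : (1:ℝ) ≤ 8 ^ α * om α 1 := by
    unfold om
    have : (8:ℝ) ^ α = (64:ℝ) ^ (α / 2) := by
      rw [show (64:ℝ) = 8 ^ (2:ℝ) by norm_num, ← Real.rpow_mul (by norm_num)]; congr 1; ring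
    rw [this, neg_div, Real.rpow_neg (by norm_num), ← div_eq_mul_inv, one_le_div (Real.rpow_pos_of_pos (by norm_num) _)]
    exact Real.rpow_le_rpow (by norm_num) (by norm_num) (by linarith)
  exact h2.trans (mul_le_mul_of_nonneg_left h1 (by positivity))

lemma real_bound {d : ℕ} (hd : 3 ≤ d) (hodd : Odd d) {α : ℝ} (hα : 1 ≤ α) :
    ∃ C : ℝ, 0 < C ∧ ∀ (K : ℝ) (U : ℝ × Ed d → ℝ) (Q : Ed d → ℝ) (T : ℝ), GDat α K U Q →
      eLpNorm (fun x => om α ‖x‖ * U (T, x)) 2 volume ≤ ENNReal.ofReal (C * (om α T * (K * nQ Q))) ∧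
      eLpNorm (fun x => om α ‖x‖ * DD (et d) U (T, x)) 2 volume ≤ ENNReal.ofReal (C * (om α T * (K * nQ Q))) ∧
      ∀ j, eLpNorm (fun x => om α ‖x‖ * DD (ex j) U (T, x)) 2 volume ≤ ENNReal.ofReal (C * (om α T * (K * nQ Q))) := by
  obtain ⟨L, hL, H⟩ := inner_bound hd hodd hα
  have hα0 : 0 ≤ α := by linarith
  have E0 : (0:ℝ) < 8 ^ α := by positivity
  refine ⟨8 ^ α * (2 * d * (2 + 6 * L) + 3 + 2 * (1 + d) + 4), by positivity, fun K U Q T G => ?_⟩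
  obtain ⟨g0, gt, gj⟩ := G.glob hd hodd hα T
  set S := K * nQ Q with hS
  have S0 : 0 ≤ S := mul_nonneg G.K0 (nQ_nonneg _)
  have Mle : ∀ {F : Ed d → ℝ} {r : ℝ}, eB (fun x => om α ‖x‖ * F x) r ≤ eB F r := by
    intro F r
    refine eLpNorm_mono fun x => ?_
    rw [norm_mul, Real.norm_of_nonneg (om_pos _ _).le]
    exact mul_le_of_le_one_left (norm_nonneg _) (om_le_one hα0 _)
  have Mle' : ∀ {F : Ed d → ℝ}, eLpNorm (fun x => om α ‖x‖ * F x) 2 volume ≤ eLpNorm F 2 volume := by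
    intro F
    refine eLpNorm_mono fun x => ?_
    rw [norm_mul, Real.norm_of_nonneg (om_pos _ _).le]
    exact mul_le_of_le_one_left (norm_nonneg _) (om_le_one hα0 _)
  have s0 := (sl_smooth G.sU T).continuous
  have s1 := fun v => (sl_smooth (DD_smooth G.sU v) T).continuous
  have O0 := om_pos α T
  have P0 : 0 ≤ 8 ^ α * om α T * S := by positivity
  have fin : ∀ {F : Ed d → ℝ} {A : ℝ}, 0 ≤ A → A ≤ 2 * d * (2 + 6 * L) + 3 + 2 * (1 + d) + 4 →
      eLpNorm F 2 volume ≤ ENNReal.ofReal (A * (8 ^ α * om α T * S)) →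
      eLpNorm F 2 volume ≤ ENNReal.ofReal (8 ^ α * (2 * d * (2 + 6 * L) + 3 + 2 * (1 + d) + 4) * (om α T * S)) := by
    intro F A _ hA h
    refine h.trans (ENNReal.ofReal_le_ofReal ?_)
    have := mul_le_mul_of_nonneg_right hA P0
    linarith
  have dL : 0 ≤ 2 * d * (2 + 6 * L) := by positivity
  have d0 : (0:ℝ) ≤ d := by positivity
  rcases lt_or_ge |T| 1 with hT | hT
  · have h1 : S ≤ 8 ^ α * om α T * S := le_mul_of_one_le_left S0 (om_small hα hT)
    have up : ∀ {A : ℝ}, 0 ≤ A → ENNReal.ofReal (A * S) ≤ ENNReal.ofReal (A * (8 ^ α * om α T * S)) := fun hA =>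
      ENNReal.ofReal_le_ofReal (mul_le_mul_of_nonneg_left h1 hA)
    exact ⟨fin (A := 3) (by norm_num) (by linarith) ((Mle'.trans g0).trans (up (by norm_num))),
      fin (A := 1 + d) (by positivity) (by linarith) ((Mle'.trans gt).trans (up (by positivity))),
      fun j => fin (A := 2) (by norm_num) (by linarith) ((Mle'.trans (gj j)).trans (up (by norm_num)))⟩
  · have Tp : 0 < |T| := by linarith
    obtain ⟨-, lt, lj⟩ := G.loc (T := T) hd hodd hα (a := |T| / 2) (r := |T| / 8) (by positivity) (by positivity)
      (Or.inr (by linarith))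
    have l0 := H K U Q T G hT
    have h2 : om α (|T| / 2) ≤ 8 ^ α * om α T := om_half hα (by norm_num) (by norm_num)
    have h8 : om α (|T| / 8) ≤ 8 ^ α * om α T := om_half hα (by norm_num) (by norm_num)
    have q2 : om α (|T| / 2) * S ≤ 8 ^ α * om α T * S := mul_le_mul_of_nonneg_right h2 S0
    have q8 : om α (|T| / 8) * S ≤ 8 ^ α * om α T * S := mul_le_mul_of_nonneg_right h8 S0
    have p2 : 0 ≤ om α (|T| / 2) * S := mul_nonneg (om_pos _ _).le S0
    have p8 : 0 ≤ om α (|T| / 8) * S := mul_nonneg (om_pos _ _).le S0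
    refine ⟨fin (A := 2 * d * (2 + 6 * L) + 3) (by positivity) (by linarith) ?_,
      fin (A := 2 * (1 + d)) (by positivity) (by linarith) ?_, fun j => fin (A := 4) (by norm_num) (by linarith) ?_⟩
    · refine (tworeg hα0 s0 (by positivity) (by positivity) (by positivity) g0 l0).trans (ENNReal.ofReal_le_ofReal ?_)
      have := mul_le_mul_of_nonneg_left q2 dL
      linarith
    · refine (tworeg hα0 (s1 _) (by positivity) (by positivity) (by positivity) gt (Mle.trans lt)).trans (ENNReal.ofReal_le_ofReal ?_)
      have := mul_le_mul_of_nonneg_left q2 d0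
      have := mul_le_mul_of_nonneg_left q8 d0
      linarith
    · refine (tworeg hα0 (s1 _) (by positivity) (by positivity) (by positivity) (gj j) (Mle.trans (lj j))).trans (ENNReal.ofReal_le_ofReal ?_)
      linarith

end WaveAux


open MeasureTheory Filter Topology
open scoped ContDiff

namespace WaveAux

lemma omx_smooth {d : ℕ} (α : ℝ) : ContDiff ℝ ∞ (fun x : Ed d => om α ‖x‖) := by
  unfold om
  exact (contDiff_const.add (contDiff_norm_sq ℝ)).rpow_const_of_ne (fun x => (one_add_pos x).ne')

lemma omx_DD {d : ℕ} {α : ℝ} (hα : 0 ≤ α) (j : Fin d) (x : Ed d) :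
    |DD (ei j) (fun x : Ed d => om α ‖x‖) x| ≤ α * om α ‖x‖ := by
  have h := (Real.hasDerivAt_rpow_const (p := -α / 2) (Or.inl (one_add_pos x).ne')).comp_hasFDerivAt x (jap_hasFDerivAt x)
  have h2 := h.fderiv
  simp only [Function.comp_def] at h2
  unfold DD om
  rw [h2]
  simp only [smul_apply, inner_ei, smul_eq_mul, nsmul_eq_mul]
  push_cast
  have hp := one_add_pos x
  rw [Real.rpow_sub_one hp.ne']
  have hx : |x j| ≤ 1 + ‖x‖ ^ 2 := by
    have : |x j| ≤ ‖x‖ := by simpa using PiLp.norm_apply_le x j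
    nlinarith [sq_nonneg (‖x‖ - 1), norm_nonneg x]
  have hr : 0 < (1 + ‖x‖ ^ 2) ^ (-α / 2) := Real.rpow_pos_of_pos hp _
  have e : -α / 2 * ((1 + ‖x‖ ^ 2) ^ (-α / 2) / (1 + ‖x‖ ^ 2)) * (2 * x j) =
      - (α * (1 + ‖x‖ ^ 2) ^ (-α / 2) * (x j / (1 + ‖x‖ ^ 2))) := by ring
  rw [e, abs_neg, abs_mul, abs_of_nonneg (by positivity : 0 ≤ α * (1 + ‖x‖ ^ 2) ^ (-α / 2)), abs_div, abs_of_pos hp]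
  exact mul_le_of_le_one_right (by positivity) ((div_le_one hp).mpr hx)

section cplx
variable {d : ℕ}

lemma c_slice_x {P : ℝ × Ed d → ℂ} (hP : Differentiable ℝ P) (s : ℝ) (x v : Ed d) :
    fderiv ℝ (fun y => P (s, y)) x v = fderiv ℝ P (s, x) (0, v) := by
  have := ((hP (s, x)).hasFDerivAt.comp x (hasFDerivAt_prodMk_right s x)).fderiv
  simp only [Function.comp_def] at this
  rw [this]; simp

lemma c_slice_t {P : ℝ × Ed d → ℂ} (hP : Differentiable ℝ P) (s : ℝ) (x : Ed d) :
    deriv (fun q => P (q, x)) s = fderiv ℝ P (s, x) (1, 0) := by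
  have h0 : HasFDerivAt (fun e : ℝ => (e, x)) (ContinuousLinearMap.inl ℝ ℝ (Ed d)) s := hasFDerivAt_prodMk_left s x
  have h1 : HasFDerivAt (fun e : ℝ => P (e, x)) _ s := HasFDerivAt.comp s (hP (s, x)).hasFDerivAt h0
  have := h1.fderiv
  rw [← fderiv_apply_one_eq_deriv, this]; simp

lemma c_smooth {V : Type*} [NormedAddCommGroup V] [NormedSpace ℝ V] {P : V → ℂ} (hP : ContDiff ℝ ∞ P) (v : V) :
    ContDiff ℝ ∞ (fun p => fderiv ℝ P p v) :=
  (hP.fderiv_right (by simp)).clm_apply contDiff_const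

lemma l_DD {V : Type*} [NormedAddCommGroup V] [NormedSpace ℝ V] {P : V → ℂ} (hP : Differentiable ℝ P) (l : ℂ →L[ℝ] ℝ) (v : V) :
    DD v (fun p => l (P p)) = fun p => l (fderiv ℝ P p v) := by
  funext p
  have := (l.hasFDerivAt.comp p (hP p).hasFDerivAt).fderiv
  simp only [Function.comp_def] at this
  unfold DD
  rw [this]; simp

/-- real and imaginary parts -/
noncomputable def part (b : Bool) : ℂ →L[ℝ] ℝ := if b then Complex.reCLM else Complex.imCLM

lemma part_le (b : Bool) (z : ℂ) : |part b z| ≤ ‖z‖ := by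
  cases b
  · simpa [part] using Complex.abs_im_le_norm z
  · simpa [part] using Complex.abs_re_le_norm z

lemma le_part (z : ℂ) : ‖z‖ ≤ ∑ b, |part b z| := by
  simpa [part] using Complex.norm_le_abs_re_add_abs_im z

lemma op_le (A : Ed d →L[ℝ] ℂ) : ‖A‖ ≤ ∑ j, ‖A (ei j)‖ := by
  refine A.opNorm_le_bound (Finset.sum_nonneg fun _ _ => norm_nonneg _) fun x => ?_
  have hx : x = ∑ j, x j • (ei j : Ed d) := by
    have := (EuclideanSpace.basisFun (Fin d) ℝ).sum_repr x
    simp [ei] at this ⊢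
    exact this.symm
  conv_lhs => rw [hx]
  rw [map_sum, Finset.sum_mul]
  refine (norm_sum_le _ _).trans (Finset.sum_le_sum fun j _ => ?_)
  rw [map_smul, norm_smul, mul_comm]
  exact mul_le_mul_of_nonneg_left (by simpa using PiLp.norm_apply_le x j) (norm_nonneg _)

lemma sumb {ι : Type*} [Fintype ι] {F : Type*} [NormedAddCommGroup F] {f : Ed d → F} {g : ι → Ed d → ℝ}
    (hg : ∀ k, Continuous (g k)) {B : ENNReal} (hB : ∀ k, eLpNorm (g k) 2 volume ≤ B)
    (h : ∀ x, ‖f x‖ ≤ ∑ k, |g k x|) : eLpNorm f 2 volume ≤ Fintype.card ι * B := by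
  have h1 : eLpNorm f 2 volume ≤ eLpNorm (∑ k, fun x => |g k x|) 2 volume :=
    eLpNorm_mono_real fun x => by simpa using h x
  refine h1.trans ((eLpNorm_sum_le (fun k _ => (hg k).abs.aestronglyMeasurable) (by norm_num)).trans ?_)
  have : ∀ k ∈ (Finset.univ : Finset ι), eLpNorm (fun x => |g k x|) 2 volume ≤ B := fun k _ => by
    refine le_trans (le_of_eq ?_) (hB k)
    exact eLpNorm_norm (g k)
  refine (Finset.sum_le_sum this).trans ?_
  simp

end cplx

end WaveAux

open Filter Topology
open scoped ContDiff

namespace WaveAux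

lemma wave_of {d : ℕ} {P : ℝ × Ed d → ℂ} (hP : ContDiff ℝ ∞ P)
    (h : ∀ s : ℝ, ∀ x, deriv (fun r => deriv (fun q => P (q, x)) r) s = lapD d (fun y => P (s, y)) x)
    (l : ℂ →L[ℝ] ℝ) : IsWave (fun p => l (P p)) := by
  have dP : Differentiable ℝ P := hP.differentiable (by simp)
  have dd : ∀ v, Differentiable ℝ (fun p => fderiv ℝ P p v) := fun v => (c_smooth hP v).differentiable (by simp)
  rintro ⟨s, x⟩
  have h' := h s x
  unfold lapD at h'
  simp only [c_slice_t dP, c_slice_x dP] at h'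
  have e1 := c_slice_t (dd ((1:ℝ), (0 : Ed d))) s x
  rw [e1] at h'
  have e2 : ∀ v : Ed d, _ := fun v => c_slice_x (dd ((0:ℝ), v)) s x v
  simp only [e2] at h'
  simp only [l_DD dP, l_DD (dd _)]
  unfold et ex
  rw [h', map_sum]

lemma gdat_of {d : ℕ} {α : ℝ} (hα : 1 ≤ α) {P : ℝ × Ed d → ℂ} (hP : ContDiff ℝ ∞ P)
    (h : ∀ s : ℝ, ∀ x, deriv (fun r => deriv (fun q => P (q, x)) r) s = lapD d (fun y => P (s, y)) x)
    {v₀ v₁ : SchwartzMap (Ed d) ℂ} (h0 : ∀ x, P (0, x) = om α ‖x‖ • v₀ x)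
    (h1 : ∀ x, deriv (fun s => P (s, x)) 0 = om α ‖x‖ • v₁ x) (b : Bool)
    (Qi : Integrable (fun x => (‖v₀ x‖ + ‖fderiv ℝ v₀ x‖ + ‖v₁ x‖) ^ 2)) :
    GDat α (1 + α) (fun p => part b (P p)) (fun x => ‖v₀ x‖ + ‖fderiv ℝ v₀ x‖ + ‖v₁ x‖) := by
  have sv : ContDiff ℝ ∞ v₀ := v₀.smooth ⊤
  have dv : Differentiable ℝ v₀ := sv.differentiable (by simp)
  have dP : Differentiable ℝ P := hP.differentiable (by simp)
  have sU : ContDiff ℝ ∞ (fun p => part b (P p)) := (part b).contDiff.comp hP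
  have e0 : (fun x => part b (P (0, x))) = fun x => om α ‖x‖ * part b (v₀ x) := by
    funext x; rw [h0, map_smul, smul_eq_mul]
  have n0 := fun y => norm_nonneg (v₀ y)
  have n1 := fun y => norm_nonneg (v₁ y)
  have nd := fun y => norm_nonneg (fderiv ℝ v₀ y)
  have pl := part_le b
  have key : ∀ y (z : ℝ), |z| ≤ (1 + α) * (‖v₀ y‖ + ‖fderiv ℝ v₀ y‖ + ‖v₁ y‖) →
      |om α ‖y‖ * z| ≤ (1 + α) * om α ‖y‖ * |‖v₀ y‖ + ‖fderiv ℝ v₀ y‖ + ‖v₁ y‖| := by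
    intro y z hz
    rw [abs_mul, abs_of_pos (om_pos _ _), abs_of_nonneg (by positivity : 0 ≤ ‖v₀ y‖ + ‖fderiv ℝ v₀ y‖ + ‖v₁ y‖)]
    have := mul_le_mul_of_nonneg_left hz (om_pos α ‖y‖).le
    linarith
  refine ⟨sU, wave_of hP h _, ?_, Qi, by linarith, fun y => ?_, fun y j => ?_, fun y => ?_⟩
  · exact (v₀.continuous.norm.add (sv.continuous_fderiv (by simp)).norm).add v₁.continuous.norm
  · have this : part b (P (0, y)) = om α ‖y‖ * part b (v₀ y) := congrFun e0 y
    show |part b (P (0, y))| ≤ _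
    rw [this]
    apply key
    nlinarith [pl (v₀ y), n0 y, n1 y, nd y]
  · have hs := congrFun (sl_DD sU 0 j) y
    try simp only at hs
    rw [← hs, e0, DD_mul (omx_smooth α) (show ContDiff ℝ ∞ (fun x => part b (v₀ x)) from (part b).contDiff.comp sv)]
    try simp only
    rw [l_DD dv]
    have t1 := omx_DD (by linarith : 0 ≤ α) j y
    have t2 := pl (v₀ y)
    have t3 : |part b (fderiv ℝ v₀ y (ei j))| ≤ ‖fderiv ℝ v₀ y‖ := by
      refine (pl _).trans (((fderiv ℝ v₀ y).le_opNorm (ei j)).trans ?_)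
      simp [ei]
    set A := DD (ei j) (fun x : Ed d => om α ‖x‖) y
    have o0 := om_pos α ‖y‖
    rw [abs_of_nonneg (by positivity : 0 ≤ ‖v₀ y‖ + ‖fderiv ℝ v₀ y‖ + ‖v₁ y‖)]
    have g1 : |A * part b (v₀ y)| ≤ α * om α ‖y‖ * ‖v₀ y‖ := by
      rw [abs_mul]; exact mul_le_mul t1 t2 (abs_nonneg _) (by positivity)
    have g2 : |om α ‖y‖ * part b (fderiv ℝ v₀ y (ei j))| ≤ om α ‖y‖ * ‖fderiv ℝ v₀ y‖ := by
      rw [abs_mul, abs_of_pos o0]; exact mul_le_mul_of_nonneg_left t3 o0.le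
    have g3 : 0 ≤ om α ‖y‖ * ‖v₀ y‖ := by positivity
    have g4 : 0 ≤ α * om α ‖y‖ * ‖fderiv ℝ v₀ y‖ := by positivity
    have g5 : 0 ≤ (1 + α) * om α ‖y‖ * ‖v₁ y‖ := by positivity
    refine (abs_add_le _ _).trans ?_
    linarith
  · rw [l_DD dP]
    have := h1 y
    rw [c_slice_t dP] at this
    unfold et
    simp only [this]
    rw [map_smul, smul_eq_mul]
    apply key
    nlinarith [pl (v₁ y), n0 y, n1 y, nd y]

lemma dm {d : ℕ} {α : ℝ} (hα : 1 ≤ α) {u : Ed d → ℝ} (hu : ContDiff ℝ ∞ u) {B : ℝ} (hB : 0 ≤ B) (j : Fin d)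
    (h0 : eLpNorm (fun x => om α ‖x‖ * u x) 2 volume ≤ ENNReal.ofReal B)
    (h1 : eLpNorm (fun x => om α ‖x‖ * DD (ei j) u x) 2 volume ≤ ENNReal.ofReal B) :
    eLpNorm (DD (ei j) (fun x => om α ‖x‖ * u x)) 2 volume ≤ ENNReal.ofReal ((1 + α) * B) := by
  have so := omx_smooth (d := d) α
  have e : DD (ei j) (fun x => om α ‖x‖ * u x) =
      (fun x => om α ‖x‖ * DD (ei j) u x) + fun x => DD (ei j) (fun x : Ed d => om α ‖x‖) x * u x := by
    rw [DD_mul so hu]; funext x; simp only [Pi.add_apply]; ring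
  rw [e, one_add_mul, ENNReal.ofReal_add hB (by positivity)]
  refine (eLpNorm_add_le (so.continuous.mul (DD_smooth hu _).continuous).aestronglyMeasurable
    ((DD_smooth so _).continuous.mul hu.continuous).aestronglyMeasurable (by norm_num)).trans (add_le_add h1 ?_)
  refine (eLpNorm_le_mul_eLpNorm_of_ae_le_mul (c := α) (g := fun x => om α ‖x‖ * u x) (Eventually.of_forall fun x => ?_) 2).trans ?_
  · show ‖DD (ei j) (fun x : Ed d => om α ‖x‖) x * u x‖ ≤ α * ‖om α ‖x‖ * u x‖
    rw [norm_mul, norm_mul, ← mul_assoc, Real.norm_of_nonneg (om_pos _ _).le]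
    exact mul_le_mul_of_nonneg_right (omx_DD (by linarith) j x) (norm_nonneg _)
  · rw [ENNReal.ofReal_mul (by linarith)]
    gcongr

end WaveAux

open WaveAux in
/-- **Weighted decay of the free wave group in odd dimensions:**
`‖⟨x⟩^{-α} e^{-itG₀} ⟨x⟩^{-α}‖_{𝓛(H¹⊕L²)} ≤ C⟨t⟩^{-α}` for `α ≥ 1`, `d ≥ 3` odd.
Stated on solutions: if `u` solves the free wave equation with data
`(⟨x⟩^{-α}v₀, ⟨x⟩^{-α}v₁)` (so that `(u(t), ∂ₜu(t)) = e^{-itG₀}⟨x⟩^{-α}(v₀,v₁)`),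
then the `H¹⊕L²` norm of `(⟨x⟩^{-α}u(t), ⟨x⟩^{-α}∂ₜu(t))` is bounded by
`C⟨t⟩^{-α}` times the `H¹⊕L²` norm of `(v₀, v₁)`, with `C` independent of `t`. -/
theorem weighted_free_wave_group_decay
    (d : ℕ) (hd : 3 ≤ d) (hodd : Odd d) (α : ℝ) (hα : 1 ≤ α) :
    ∃ C > 0, ∀ t : ℝ,
      ∀ v₀ v₁ : SchwartzMap (EuclideanSpace ℝ (Fin d)) ℂ,
      ∀ u : ℝ → EuclideanSpace ℝ (Fin d) → ℂ,
        ContDiff ℝ (⊤ : ℕ∞) (fun p : ℝ × EuclideanSpace ℝ (Fin d) => u p.1 p.2) →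
        (∀ s : ℝ, ∀ x, deriv (fun r => deriv (fun q => u q x) r) s = lapD d (u s) x) →
        (∀ x, u 0 x = ((1 + ‖x‖ ^ 2) ^ (-α / 2) : ℝ) • v₀ x) →
        (∀ x, deriv (fun s => u s x) 0 = ((1 + ‖x‖ ^ 2) ^ (-α / 2) : ℝ) • v₁ x) →
        eLpNorm (fun x : EuclideanSpace ℝ (Fin d) =>
            ((1 + ‖x‖ ^ 2) ^ (-α / 2) : ℝ) • u t x) 2 volume +
          eLpNorm (fderiv ℝ (fun x : EuclideanSpace ℝ (Fin d) =>
            ((1 + ‖x‖ ^ 2) ^ (-α / 2) : ℝ) • u t x)) 2 volume +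
          eLpNorm (fun x : EuclideanSpace ℝ (Fin d) =>
            ((1 + ‖x‖ ^ 2) ^ (-α / 2) : ℝ) • deriv (fun s => u s x) t) 2 volume
        ≤ ENNReal.ofReal (C * (1 + t ^ 2) ^ (-α / 2)) *
            (eLpNorm (⇑v₀) 2 volume + eLpNorm (fderiv ℝ (⇑v₀)) 2 volume +
              eLpNorm (⇑v₁) 2 volume) := by
  obtain ⟨C, C0, H⟩ := real_bound hd hodd hα
  refine ⟨(4 + 2 * d * (1 + α)) * (C * (1 + α)), by positivity, ?_⟩
  intro t v₀ v₁ u hu hw h0 h1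
  set P : ℝ × Ed d → ℂ := fun p => u p.1 p.2 with hPdef
  have hP : ContDiff ℝ ∞ P := hu
  have dP : Differentiable ℝ P := hP.differentiable (by simp)
  set Q : Ed d → ℝ := fun x => ‖v₀ x‖ + ‖fderiv ℝ v₀ x‖ + ‖v₁ x‖ with hQ
  have m0 : MemLp v₀ 2 (volume : Measure (Ed d)) := v₀.memLp 2 volume
  have m1 : MemLp v₁ 2 (volume : Measure (Ed d)) := v₁.memLp 2 volume
  have md : MemLp (fderiv ℝ v₀) 2 (volume : Measure (Ed d)) := (SchwartzMap.fderivCLM ℝ (Ed d) ℂ v₀).memLp 2 volume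
  have mQ : MemLp Q 2 (volume : Measure (Ed d)) := (m0.norm.add md.norm).add m1.norm
  have Qi : Integrable (fun x => Q x ^ 2) := (memLp_two_iff_integrable_sq mQ.1).mp mQ
  have hN : ENNReal.ofReal (nQ Q) ≤ eLpNorm (⇑v₀) 2 volume + eLpNorm (fderiv ℝ (⇑v₀)) 2 volume +
      eLpNorm (⇑v₁) 2 volume := by
    have e : ENNReal.ofReal (nQ Q) = eLpNorm Q 2 volume := by
      rw [mQ.eLpNorm_eq_integral_rpow_norm (by norm_num) (by norm_num)]
      congr 1
      simp only [ENNReal.toReal_ofNat, Real.rpow_ofNat, Real.norm_eq_abs, sq_abs]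
      rw [← one_div, ← Real.sqrt_eq_rpow]; rfl
    rw [e]
    refine (eLpNorm_add_le (m0.norm.add md.norm).1 m1.norm.1 (by norm_num)).trans ?_
    refine add_le_add ((eLpNorm_add_le m0.norm.1 md.norm.1 (by norm_num)).trans ?_) (eLpNorm_norm _).le
    exact add_le_add (eLpNorm_norm _).le (eLpNorm_norm _).le
  have G : ∀ b, GDat α (1 + α) (fun p => part b (P p)) Q := fun b => gdat_of hα hP hw h0 h1 b Qi
  set B := C * (om α t * ((1 + α) * nQ Q)) with hBdef
  have B0 : 0 ≤ B := by
    have := om_pos α t; have := nQ_nonneg Q; positivity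
  have HB := fun b => H _ _ _ t (G b)
  have so := omx_smooth (d := d) α
  have su : ∀ b, ContDiff ℝ ∞ (fun x => part b (P (t, x))) := fun b => sl_smooth (G b).sU t
  have T1 : eLpNorm (fun x : Ed d => om α ‖x‖ • u t x) 2 volume ≤ 2 * ENNReal.ofReal B := by
    have := sumb (d := d) (ι := Bool) (f := fun x : Ed d => om α ‖x‖ • u t x)
      (g := fun b x => om α ‖x‖ * part b (P (t, x))) (fun b => so.continuous.mul (su b).continuous)
      (fun b => (HB b).1) (fun x => (le_part _).trans (le_of_eq ?_))
    · simpa using this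
    · refine Finset.sum_congr rfl fun b _ => ?_
      rw [map_smul, smul_eq_mul]
  have T3 : eLpNorm (fun x : Ed d => om α ‖x‖ • deriv (fun s => u s x) t) 2 volume ≤ 2 * ENNReal.ofReal B := by
    have := sumb (d := d) (ι := Bool) (f := fun x : Ed d => om α ‖x‖ • deriv (fun s => u s x) t)
      (g := fun b x => om α ‖x‖ * DD (et d) (fun p => part b (P p)) (t, x))
      (fun b => so.continuous.mul (sl_smooth (DD_smooth (G b).sU _) t).continuous)
      (fun b => (HB b).2.1) (fun x => (le_part _).trans (le_of_eq ?_))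
    · simpa using this
    · refine Finset.sum_congr rfl fun b _ => ?_
      rw [map_smul, smul_eq_mul, l_DD dP]
      have := c_slice_t dP t x
      simp only [hPdef] at this ⊢
      rw [this]; rfl
  have T2 : eLpNorm (fderiv ℝ (fun x : Ed d => om α ‖x‖ • u t x)) 2 volume ≤
      (d * 2 : ℕ) * ENNReal.ofReal ((1 + α) * B) := by
    have dut : Differentiable ℝ (fun x : Ed d => om α ‖x‖ • u t x) := by
      have s1 : ContDiff ℝ ∞ (fun x : Ed d => u t x) := hP.comp (by fun_prop : ContDiff ℝ ∞ fun x : Ed d => (t, x))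
      exact (so.smul s1).differentiable (by simp)
    have := sumb (d := d) (ι := Fin d × Bool) (f := fderiv ℝ (fun x : Ed d => om α ‖x‖ • u t x))
      (g := fun k => DD (ei k.1) (fun x => om α ‖x‖ * part k.2 (P (t, x))))
      (fun k => (DD_smooth (so.mul (su k.2)) _).continuous)
      (fun k => dm hα (su k.2) B0 k.1 (HB k.2).1 (by
        have := (HB k.2).2.2 k.1
        rw [sl_DD (G k.2).sU t k.1]; exact this))
      (fun x => (op_le _).trans ?_)
    · simpa using this
    · rw [Fintype.sum_prod_type]
      refine Finset.sum_le_sum fun j _ => (le_part _).trans (le_of_eq ?_)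
      refine Finset.sum_congr rfl fun b _ => ?_
      have e : (fun x => om α ‖x‖ * part b (P (t, x))) = fun x => part b (om α ‖x‖ • u t x) := by
        funext x; rw [map_smul, smul_eq_mul]
      simp only
      rw [e, l_DD dut]
  have main := add_le_add (add_le_add T1 T2) T3
  refine main.trans ?_
  have hRHS : 2 * ENNReal.ofReal B + (d * 2 : ℕ) * ENNReal.ofReal ((1 + α) * B) + 2 * ENNReal.ofReal B =
      ENNReal.ofReal ((4 + 2 * d * (1 + α)) * (C * (1 + α)) * om α t) * ENNReal.ofReal (nQ Q) := by
    have o0 := (om_pos α t).le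
    have e2 : (2 : ENNReal) = ENNReal.ofReal 2 := by simp
    have ed : ((d * 2 : ℕ) : ENNReal) = ENNReal.ofReal ((d:ℝ) * 2) := by
      rw [← ENNReal.ofReal_natCast]; push_cast; rfl
    rw [e2, ed, ← ENNReal.ofReal_mul (by norm_num), ← ENNReal.ofReal_mul (by positivity), ← ENNReal.ofReal_add (by positivity) (by positivity),
      ← ENNReal.ofReal_add (by positivity) (by positivity), ← ENNReal.ofReal_mul (by positivity)]
    congr 1
    rw [hBdef]; ring
  rw [hRHS]
  exact mul_le_mul_right hN _
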